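/- arXiv:2106.06121 — 5 statements merged into one kernel-verified Lean document; each statement's English description precedes it below -/
import Mathlib

section
/- There exists a universal constant C > 1 so that the following holds. Let n ≥ C be an integer, p ∈ [1,2], K > 0, and let 0 ≤ t ≤ (K/C)·√n. Then there exists a random vector X = (X_1,…,X_n) with i.i.d. components whose ψ_p-norm is bounded above by K, and a median m of ‖X‖₂, such that ℙ{‖X‖₂ − m ≥ t} ≥ (1/C)·exp( −C·t² / ( K²·( log(2 + K²·n/t²) )^{2/p} ) ) and ℙ{‖X‖₂ − m ≤ −t} ≥ (1/C)·exp( −C·t² / ( K²·( log(2 + K²·n/t²) )^{2/p} ) ). -/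
open MeasureTheory ENNReal

/-- The ψ_p-norm of a real random variable `Y` under measure `μ`:
`inf {λ > 0 : 𝔼 exp(|Y|^p/λ^p) ≤ 2}`. -/
noncomputable def psipNorm (p : ℝ) {Ω : Type*} [MeasurableSpace Ω] (μ : Measure Ω)
    (Y : Ω → ℝ) : ℝ :=
  sInf {l : ℝ | 0 < l ∧ ∫⁻ ω, ENNReal.ofReal (Real.exp (|Y ω| ^ p / l ^ p)) ∂μ ≤ 2}

/-- `m` is a median of the real random variable `Z` under `μ`. -/
def IsMedian {Ω : Type*} [MeasurableSpace Ω] (μ : Measure Ω) (Z : Ω → ℝ) (m : ℝ) : Prop :=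
  2⁻¹ ≤ μ {ω | m ≤ Z ω} ∧ 2⁻¹ ≤ μ {ω | Z ω ≤ m}

/-- The Euclidean norm on `Fin n → ℝ`. -/
noncomputable def euclNorm {n : ℕ} (x : Fin n → ℝ) : ℝ := Real.sqrt (∑ i, (x i) ^ 2)

noncomputable def bmu (q a : ℝ) : Measure ℝ :=
  ENNReal.ofReal q • Measure.dirac a + ENNReal.ofReal (1 - q) • Measure.dirac 0

open Classical in
noncomputable def cnt {n : ℕ} (a : ℝ) (x : Fin n → ℝ) : ℕ :=
  (Finset.univ.filter (fun i => x i = a)).card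

lemma bmu_prob {q a : ℝ} (h0 : 0 ≤ q) (h1 : q ≤ 1) : IsProbabilityMeasure (bmu q a) := by
  constructor
  simp only [bmu, Measure.coe_add, Measure.coe_smul, Pi.add_apply, Pi.smul_apply, measure_univ,
    smul_eq_mul, mul_one]
  rw [← ENNReal.ofReal_add h0 (by linarith)]
  simp

lemma bmu_ae {q a : ℝ} : ∀ᵐ y ∂(bmu q a), y = 0 ∨ y = a := by
  rw [ae_iff, bmu]
  simp

lemma bmu_integrable {q a : ℝ} (f : ℝ → ℝ) : Integrable f (bmu q a) := by
  unfold bmu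
  refine Integrable.add_measure ?_ ?_
  · exact (integrable_dirac (by simp)).smul_measure (by simp)
  · exact (integrable_dirac (by simp)).smul_measure (by simp)

lemma bmu_integral {q a : ℝ} (h0 : 0 ≤ q) (h1 : q ≤ 1) (f : ℝ → ℝ) :
    ∫ y, f y ∂(bmu q a) = q * f a + (1 - q) * f 0 := by
  unfold bmu
  rw [integral_add_measure]
  · rw [integral_smul_measure, integral_smul_measure, integral_dirac, integral_dirac,
      ENNReal.toReal_ofReal h0, ENNReal.toReal_ofReal (by linarith)]
    simp
  · exact (integrable_dirac (by simp)).smul_measure (by simp)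
  · exact (integrable_dirac (by simp)).smul_measure (by simp)

lemma prod_cnt {n : ℕ} (a θ : ℝ) (x : Fin n → ℝ) :
    ∏ i, (if x i = a then θ else 1) = θ ^ cnt a x := by
  classical
  rw [Finset.prod_ite]
  simp [cnt]

lemma mgf_cnt {n : ℕ} {q a : ℝ} (h0 : 0 ≤ q) (h1 : q ≤ 1) (ha : a ≠ 0) (θ : ℝ) :
    Integrable (fun x : Fin n → ℝ => θ ^ cnt a x) (Measure.pi fun _ => bmu q a) ∧
    ∫ x : Fin n → ℝ, θ ^ cnt a x ∂(Measure.pi fun _ => bmu q a) = (1 - q + q * θ) ^ n := by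
  have := bmu_prob (a := a) h0 h1
  simp_rw [← prod_cnt]
  constructor
  · exact Integrable.fintype_prod (f := fun _ y => if y = a then θ else 1)
      (fun _ => bmu_integrable _)
  · rw [integral_fintype_prod_eq_pow (fun y => if y = a then θ else 1), bmu_integral h0 h1]
    simp [ha.symm]
    ring

lemma cnt_ge {n : ℕ} {q a : ℝ} (h0 : 0 ≤ q) (h1 : q ≤ 1) (ha : a ≠ 0) (J : ℕ) :
    2 ^ J * (Measure.pi fun _ => bmu q a).real {x : Fin n → ℝ | J ≤ cnt a x} ≤ (1 + q) ^ n := by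
  have := bmu_prob (a := a) h0 h1
  obtain ⟨hi, he⟩ := mgf_cnt (n := n) h0 h1 ha 2
  have h := mul_meas_ge_le_integral_of_nonneg (.of_forall fun x => by positivity) hi (2 ^ J)
  rw [he, show 1 - q + q * 2 = 1 + q by ring] at h
  convert h using 4
  ext x
  exact (pow_le_pow_iff_right₀ (by norm_num : (1:ℝ) < 2)).symm

lemma cnt_le {n : ℕ} {q a : ℝ} (h0 : 0 ≤ q) (h1 : q ≤ 1) (ha : a ≠ 0) (J : ℕ) :
    (1 / 2) ^ J * (Measure.pi fun _ => bmu q a).real {x : Fin n → ℝ | cnt a x ≤ J}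
      ≤ (1 - q / 2) ^ n := by
  have := bmu_prob (a := a) h0 h1
  obtain ⟨hi, he⟩ := mgf_cnt (n := n) h0 h1 ha (1 / 2)
  have h := mul_meas_ge_le_integral_of_nonneg (.of_forall fun x => by positivity) hi ((1 / 2) ^ J)
  rw [he, show 1 - q + q * (1 / 2) = 1 - q / 2 by ring] at h
  convert h using 4
  ext x
  exact (pow_le_pow_iff_right_of_lt_one₀ (by norm_num : (0:ℝ) < 1/2) (by norm_num)).symm

lemma pi_box {n : ℕ} {q a : ℝ} (h0 : 0 ≤ q) (h1 : q ≤ 1) (ha : a ≠ 0) (s : Finset (Fin n)) :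
    (Measure.pi fun _ => bmu q a).real {fun i => if i ∈ s then a else 0}
      = q ^ s.card * (1 - q) ^ (n - s.card) := by
  have := bmu_prob (a := a) h0 h1
  rw [measureReal_def, ← Set.univ_pi_singleton, Measure.pi_pi]
  have : ∀ i : Fin n, bmu q a {if i ∈ s then a else 0}
      = if i ∈ s then ENNReal.ofReal q else ENNReal.ofReal (1 - q) := by
    intro i
    split_ifs <;> simp [bmu, ha, ha.symm]
  simp_rw [this]
  rw [Finset.prod_ite, Finset.prod_const, Finset.prod_const, ENNReal.toReal_mul,
    ENNReal.toReal_pow, ENNReal.toReal_pow, ENNReal.toReal_ofReal h0,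
    ENNReal.toReal_ofReal (by linarith)]
  congr 2
  · simp
  · rw [← Finset.compl_filter, Finset.card_compl]; simp

lemma cnt_box {n : ℕ} {a : ℝ} (ha : a ≠ 0) (s : Finset (Fin n)) :
    cnt a (fun i => if i ∈ s then a else 0) = s.card := by
  classical
  simp [cnt, ha.symm]

lemma cnt_eq {n : ℕ} {q a : ℝ} (h0 : 0 ≤ q) (h1 : q ≤ 1) (ha : a ≠ 0) (J : ℕ) :
    (n.choose J : ℝ) * (q ^ J * (1 - q) ^ (n - J)) ≤
    (Measure.pi fun _ => bmu q a).real {x : Fin n → ℝ | cnt a x = J} := by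
  classical
  have := bmu_prob (a := a) h0 h1
  let F := Finset.powersetCard J (Finset.univ : Finset (Fin n))
  have hinj : Function.Injective
      (fun (s : Finset (Fin n)) => (fun i => if i ∈ s then a else 0 : Fin n → ℝ)) := by
    intro s t h
    ext i
    have := congrFun h i
    by_cases h1 : i ∈ s <;> by_cases h2 : i ∈ t <;> simp_all
  calc _ = ∑ s ∈ F, (Measure.pi fun _ => bmu q a).real
        {(fun i => if i ∈ s then a else 0 : Fin n → ℝ)} := by
        rw [Finset.sum_congr rfl (g := fun _ => q ^ J * (1 - q) ^ (n - J))]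
        · simp [F]
        · intro s hs
          rw [pi_box h0 h1 ha, (Finset.mem_powersetCard.1 hs).2]
    _ = (Measure.pi fun _ => bmu q a).real
        (⋃ s ∈ F, {(fun i => if i ∈ s then a else 0 : Fin n → ℝ)}) := by
        rw [measureReal_biUnion_finset]
        · intro s _ t _ hst
          simpa using fun h => hst (hinj h)
        · intros; exact measurableSet_singleton _
    _ ≤ _ := by
        apply measureReal_mono
        · intro x hx
          simp only [Set.mem_iUnion, Set.mem_singleton_iff] at hx
          obtain ⟨s, hs, rfl⟩ := hx
          simp only [Set.mem_ofPred_eq]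
          rw [cnt_box ha, (Finset.mem_powersetCard.1 hs).2]
        · exact measure_ne_top _ _

lemma eucl_ae {n : ℕ} {q a : ℝ} (h0 : 0 ≤ q) (h1 : q ≤ 1) (ha : 0 < a) :
    ∀ᵐ x ∂(Measure.pi fun _ : Fin n => bmu q a), euclNorm x = a * Real.sqrt (cnt a x) := by
  classical
  have := bmu_prob (a := a) h0 h1
  have h : ∀ᵐ x ∂(Measure.pi fun _ : Fin n => bmu q a), ∀ i, x i = 0 ∨ x i = a := by
    rw [ae_all_iff]
    intro i
    exact (Measure.tendsto_eval_ae_ae (μ := fun _ : Fin n => bmu q a) (i := i)).eventually bmu_ae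
  filter_upwards [h] with x hx
  have : ∑ i, (x i) ^ 2 = a ^ 2 * cnt a x := by
    have : ∀ i, (x i) ^ 2 = if x i = a then a ^ 2 else 0 := by
      intro i
      rcases hx i with h | h
      · simp [h, ha.ne]
      · simp [h]
    simp_rw [this]
    rw [← Finset.sum_filter, Finset.sum_const, cnt]
    simp; ring
  rw [euclNorm, this, Real.sqrt_mul (by positivity), Real.sqrt_sq ha.le]

lemma one_sub_pow_ge {n k : ℕ} (hk : 1 ≤ k) (hn : 64 * k ≤ n) :
    Real.exp (-(8 * k)) ≤ (1 - 4 * (k : ℝ) / n) ^ n := by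
  have hn' : (64 * k : ℝ) ≤ n := by exact_mod_cast hn
  have hk' : (1 : ℝ) ≤ k := by exact_mod_cast hk
  have hnpos : (0 : ℝ) < n := by linarith
  set q := 4 * (k : ℝ) / n with hq
  have hq0 : 0 ≤ q := by positivity
  have hq1 : q ≤ 1 / 16 := by rw [hq, div_le_iff₀ hnpos]; linarith
  have hnq : n * q = 4 * k := by rw [hq]; field_simp
  have h1 : Real.exp (-(2 * q)) ≤ 1 - q := by
    rw [Real.exp_neg]
    apply inv_le_of_inv_le₀ (by linarith)
    rw [inv_le_iff_one_le_mul₀ (by linarith)]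
    have := Real.add_one_le_exp (2 * q)
    nlinarith
  calc Real.exp (-(8 * k)) = Real.exp (-(2 * q)) ^ n := by
        rw [← Real.exp_nat_mul]; congr 1; linear_combination 2 * hnq
    _ ≤ _ := pow_le_pow_left₀ (Real.exp_pos _).le h1 n

lemma exp_three : (8 : ℝ) ≤ Real.exp 3 := by
  have h := Real.exp_one_gt_d9
  have : Real.exp 3 = Real.exp 1 ^ 3 := by rw [← Real.exp_nat_mul]; norm_num
  rw [this]
  calc (8 : ℝ) = 2 ^ 3 := by norm_num
    _ ≤ _ := pow_le_pow_left₀ (by norm_num) (by linarith) 3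

lemma binom_ge {n k : ℕ} (hk : 1 ≤ k) (hn : 64 * k ≤ n) :
    Real.exp (-(64 * k)) ≤ (n.choose (16 * k) : ℝ) *
      ((4 * (k : ℝ) / n) ^ (16 * k) * (1 - 4 * (k : ℝ) / n) ^ (n - 16 * k)) := by
  have h8 := one_sub_pow_ge hk hn
  have hn' : (64 * k : ℝ) ≤ n := by exact_mod_cast hn
  have hk' : (1 : ℝ) ≤ k := by exact_mod_cast hk
  have hnpos : (0 : ℝ) < n := by linarith
  set q := 4 * (k : ℝ) / n with hq
  have hq0 : 0 ≤ q := by positivity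
  have hq1 : q ≤ 1 / 16 := by rw [hq, div_le_iff₀ hnpos]; linarith
  have hnq : n * q = 4 * k := by rw [hq]; field_simp
  set J := 16 * k with hJ
  have hJpos : (0 : ℝ) < J := by rw [hJ]; push_cast; linarith
  have hc := Nat.pow_le_choose (α := ℝ) J n
  have hsub : (n : ℝ) / 2 ≤ ((n + 1 - J : ℕ) : ℝ) := by
    rw [Nat.cast_sub (by omega), hJ]; push_cast; linarith
  have hf : (J.factorial : ℝ) ≤ (J : ℝ) ^ J := by exact_mod_cast Nat.factorial_le_pow J
  have hfpos : (0 : ℝ) < J.factorial := by exact_mod_cast Nat.factorial_pos J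
  have h2 : ((n : ℝ) / 2 / J) ^ J ≤ n.choose J := by
    refine le_trans ?_ hc
    rw [div_pow]
    gcongr
  have h3 : (1 / 8 : ℝ) ^ J ≤ n.choose J * q ^ J := by
    calc (1 / 8 : ℝ) ^ J = ((n : ℝ) / 2 / J) ^ J * q ^ J := by
          rw [← mul_pow]; congr 1
          rw [hJ, hq]; push_cast; field_simp; norm_num
      _ ≤ _ := by gcongr
  have h4 : Real.exp (-(48 * k)) ≤ (1 / 8 : ℝ) ^ J := by
    calc Real.exp (-(48 * k)) = Real.exp (-3) ^ J := by
          rw [← Real.exp_nat_mul, hJ]; congr 1; push_cast; ring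
      _ ≤ _ := by
          gcongr
          rw [Real.exp_neg, one_div]
          exact inv_anti₀ (by norm_num) exp_three
  have h5 : (1 - q) ^ n ≤ (1 - q) ^ (n - J) :=
    pow_le_pow_of_le_one (by linarith) (by linarith) (Nat.sub_le _ _)
  rw [← mul_assoc]
  calc Real.exp (-(64 * k)) ≤ Real.exp (-(48 * k)) * Real.exp (-(8 * k)) := by
        rw [← Real.exp_add]; apply Real.exp_le_exp.2; linarith
    _ ≤ _ := by
        apply mul_le_mul (h4.trans h3) (h8.trans h5) (Real.exp_pos _).le (by positivity)

lemma tail_hi {n k : ℕ} (hk : 1 ≤ k) (hn : 64 * k ≤ n) {a : ℝ} (ha : a ≠ 0) :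
    (Measure.pi fun _ => bmu (4 * (k : ℝ) / n) a).real {x : Fin n → ℝ | 9 * k ≤ cnt a x} < 1 / 2 := by
  have hn' : (64 * k : ℝ) ≤ n := by exact_mod_cast hn
  have hk' : (1 : ℝ) ≤ k := by exact_mod_cast hk
  have hnpos : (0 : ℝ) < n := by linarith
  set q := 4 * (k : ℝ) / n with hq
  have hq0 : 0 ≤ q := by positivity
  have hq1 : q ≤ 1 / 16 := by rw [hq, div_le_iff₀ hnpos]; linarith
  have hnq : n * q = 4 * k := by rw [hq]; field_simp
  have h := cnt_ge (n := n) hq0 (by linarith) ha (9 * k)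
  have h1 : (1 + q) ^ n ≤ Real.exp 4 ^ k := by
    calc (1 + q) ^ n ≤ Real.exp q ^ n := by
          gcongr; linarith [Real.add_one_le_exp q]
      _ = _ := by rw [← Real.exp_nat_mul, ← Real.exp_nat_mul]; congr 1; linarith
  have h2 : Real.exp 4 ≤ 128 := by
    have h := Real.exp_one_lt_d9
    have : Real.exp 4 = Real.exp 1 ^ 4 := by rw [← Real.exp_nat_mul]; norm_num
    rw [this]
    calc Real.exp 1 ^ 4 ≤ 3 ^ 4 := pow_le_pow_left₀ (Real.exp_pos _).le (by linarith) 4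
      _ ≤ 128 := by norm_num
  have h3 : (2 : ℝ) ^ (9 * k) = 4 ^ k * 128 ^ k := by rw [pow_mul, ← mul_pow]; norm_num
  rw [h3] at h
  have h4 : Real.exp 4 ^ k ≤ 128 ^ k := pow_le_pow_left₀ (Real.exp_pos _).le h2 k
  have h5 : (4 : ℝ) ≤ 4 ^ k := le_self_pow₀ (by norm_num) (by omega)
  set P := (Measure.pi fun _ => bmu q a).real {x : Fin n → ℝ | 9 * k ≤ cnt a x}
  have hP : 0 ≤ P := measureReal_nonneg
  have h6 : (0 : ℝ) < 128 ^ k := by positivity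
  have h7 : 128 ^ k * (4 ^ k * P) ≤ 128 ^ k * 1 := by linarith
  have h8 := le_of_mul_le_mul_left h7 h6
  nlinarith

lemma tail_lo {n k : ℕ} (hk : 1 ≤ k) (hn : 64 * k ≤ n) {a : ℝ} (ha : a ≠ 0) :
    (Measure.pi fun _ => bmu (4 * (k : ℝ) / n) a).real {x : Fin n → ℝ | cnt a x ≤ k} ≤ 1 / 2 := by
  have hn' : (64 * k : ℝ) ≤ n := by exact_mod_cast hn
  have hk' : (1 : ℝ) ≤ k := by exact_mod_cast hk
  have hnpos : (0 : ℝ) < n := by linarith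
  set q := 4 * (k : ℝ) / n with hq
  have hq0 : 0 ≤ q := by positivity
  have hq1 : q ≤ 1 / 16 := by rw [hq, div_le_iff₀ hnpos]; linarith
  have hnq : n * q = 4 * k := by rw [hq]; field_simp
  have h := cnt_le (n := n) hq0 (by linarith) ha k
  have h1 : (1 - q / 2) ^ n ≤ Real.exp (-2) ^ k := by
    calc (1 - q / 2) ^ n ≤ Real.exp (-(q / 2)) ^ n := by
          gcongr
          · linarith
          · linarith [Real.add_one_le_exp (-(q/2))]
      _ = _ := by rw [← Real.exp_nat_mul, ← Real.exp_nat_mul]; congr 1; linarith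
  have h2 : Real.exp (-2) ≤ 1 / 4 := by
    rw [Real.exp_neg, one_div]
    apply inv_anti₀ (by norm_num)
    have h := Real.exp_one_gt_d9
    have : Real.exp 2 = Real.exp 1 ^ 2 := by rw [← Real.exp_nat_mul]; norm_num
    rw [this]; nlinarith
  have h4 : Real.exp (-2) ^ k ≤ (1 / 4) ^ k := pow_le_pow_left₀ (Real.exp_pos _).le h2 k
  have h3 : (1 / 4 : ℝ) ^ k = (1 / 2) ^ k * (1 / 2) ^ k := by rw [← mul_pow]; norm_num
  have h5 : (1 / 2 : ℝ) ^ k ≤ 1 / 2 := pow_le_of_le_one (by norm_num) (by norm_num) (by omega)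
  have h6 : (0 : ℝ) < (1 / 2) ^ k := by positivity
  rw [h3] at h4
  exact (le_of_mul_le_mul_left (h.trans (h1.trans h4)) h6).trans h5

lemma core {n k : ℕ} (hk : 1 ≤ k) (hn : 64 * k ≤ n) {a t : ℝ} (ha : 0 < a)
    (ht : t ≤ a * Real.sqrt k) :
    ∃ m : ℝ, IsMedian (Measure.pi fun _ : Fin n => bmu (4 * (k : ℝ) / n) a)
        (fun x => euclNorm x) m ∧
      ENNReal.ofReal (Real.exp (-(64 * k))) ≤
        (Measure.pi fun _ : Fin n => bmu (4 * (k : ℝ) / n) a) {x | t ≤ euclNorm x - m} ∧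
      ENNReal.ofReal (Real.exp (-(64 * k))) ≤
        (Measure.pi fun _ : Fin n => bmu (4 * (k : ℝ) / n) a) {x | euclNorm x - m ≤ -t} := by
  classical
  have hhi := tail_hi hk hn ha.ne'
  have hlo := tail_lo hk hn ha.ne'
  have hb := binom_ge hk hn
  have hz := one_sub_pow_ge hk hn
  have hn' : (64 * k : ℝ) ≤ n := by exact_mod_cast hn
  have hk' : (1 : ℝ) ≤ k := by exact_mod_cast hk
  have hnpos : (0 : ℝ) < n := by linarith
  set q := 4 * (k : ℝ) / n with hq
  have hq0 : 0 ≤ q := by positivity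
  have hq1 : q ≤ 1 / 16 := by rw [hq, div_le_iff₀ hnpos]; linarith
  have hq1' : q ≤ 1 := by linarith
  have hJ := hb.trans (cnt_eq (n := n) hq0 hq1' ha.ne' (16 * k))
  have h0 := hz.trans (le_of_eq_of_le (by simp) (cnt_eq (n := n) hq0 hq1' ha.ne' 0))
  have hae := eucl_ae (n := n) hq0 hq1' ha
  have := bmu_prob (a := a) hq0 hq1'
  set P := Measure.pi fun _ : Fin n => bmu q a with hP
  let Q : ℕ → Prop := fun j => 1 / 2 ≤ P.real {x : Fin n → ℝ | j ≤ cnt a x}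
  have cov : ∀ A B : Set (Fin n → ℝ), (∀ x, x ∈ A ∨ x ∈ B) → 1 ≤ P.real A + P.real B := by
    intro A B h
    have h2 : A ∪ B = Set.univ := by ext x; simpa using h x
    have := measureReal_union_le (μ := P) A B
    rw [h2] at this
    simpa using this
  have hQk : Q k := by
    have := cov {x | k ≤ cnt a x} {x | cnt a x ≤ k} (fun x => by
      simp only [Set.mem_ofPred_eq]; omega)
    simp only [Q]; linarith
  have hQ9 : ∀ j, 9 * k ≤ j → ¬ Q j := by
    intro j hj hQ
    have : P.real {x : Fin n → ℝ | j ≤ cnt a x} ≤ P.real {x : Fin n → ℝ | 9 * k ≤ cnt a x} :=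
      measureReal_mono (fun x hx => le_trans hj hx) (measure_ne_top _ _)
    simp only [Q] at hQ
    linarith
  set j := Nat.findGreatest Q (9 * k) with hj
  have hjQ : Q j := Nat.findGreatest_spec (P := Q) (m := k) (by omega) hQk
  have hjk : k ≤ j := Nat.le_findGreatest (by omega) hQk
  have hj9 : j < 9 * k := by
    by_contra h
    exact hQ9 j (by omega) hjQ
  have hj1 : ¬ Q (j + 1) := Nat.findGreatest_is_greatest (n := 9 * k) (by omega) (by omega)
  have hjle : 1 / 2 ≤ P.real {x : Fin n → ℝ | cnt a x ≤ j} := by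
    have := cov {x | j + 1 ≤ cnt a x} {x | cnt a x ≤ j} (fun x => by
      simp only [Set.mem_ofPred_eq]; omega)
    simp only [Q] at hj1; linarith
  have trans : ∀ (r : ℝ) (A B : Set (Fin n → ℝ)), r ≤ P.real A →
      (∀ x, euclNorm x = a * Real.sqrt (cnt a x) → x ∈ A → x ∈ B) → ENNReal.ofReal r ≤ P B := by
    intro r A B hr hAB
    have h1 : P A ≤ P B := by
      apply measure_mono_ae
      filter_upwards [hae] with x hx
      exact hAB x hx
    exact (ENNReal.ofReal_le_of_le_toReal hr).trans h1
  have half : (2⁻¹ : ℝ≥0∞) = ENNReal.ofReal (1 / 2) := by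
    rw [one_div, ENNReal.ofReal_inv_of_pos (by norm_num)]; simp
  refine ⟨a * Real.sqrt j, ⟨?_, ?_⟩, ?_, ?_⟩
  · rw [half]
    refine trans _ _ _ hjQ fun x hx hA => ?_
    simp only [Set.mem_ofPred_eq] at hA ⊢
    rw [hx]; gcongr
  · rw [half]
    refine trans _ _ _ hjle fun x hx hA => ?_
    simp only [Set.mem_ofPred_eq] at hA ⊢
    rw [hx]; gcongr
  · refine trans _ _ _ hJ fun x hx hA => ?_
    simp only [Set.mem_ofPred_eq] at hA ⊢
    rw [hx, hA]
    have e1 : Real.sqrt ((16 * k : ℕ) : ℝ) = 4 * Real.sqrt k := by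
      push_cast
      rw [Real.sqrt_mul (by norm_num), show (16 : ℝ) = 4 ^ 2 by norm_num,
        Real.sqrt_sq (by norm_num)]
    have e2 : Real.sqrt j ≤ 3 * Real.sqrt k := by
      have : Real.sqrt ((9 * k : ℕ) : ℝ) = 3 * Real.sqrt k := by
        push_cast
        rw [Real.sqrt_mul (by norm_num), show (9 : ℝ) = 3 ^ 2 by norm_num,
          Real.sqrt_sq (by norm_num)]
      rw [← this]
      apply Real.sqrt_le_sqrt
      exact_mod_cast hj9.le
    rw [e1]
    have := mul_le_mul_of_nonneg_left e2 ha.le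
    linarith
  · have h0' : Real.exp (-(64 * k)) ≤ P.real {x : Fin n → ℝ | cnt a x = 0} :=
      le_trans (Real.exp_le_exp.2 (by linarith)) h0
    refine trans _ _ _ h0' fun x hx hA => ?_
    simp only [Set.mem_ofPred_eq] at hA ⊢
    rw [hx, hA]
    have : Real.sqrt k ≤ Real.sqrt j := by
      apply Real.sqrt_le_sqrt; exact_mod_cast hjk
    have := mul_le_mul_of_nonneg_left this ha.le
    simp
    linarith

lemma psip_le {q p K M : ℝ} (hq0 : 0 < q) (hq1 : q ≤ 1) (hp : 0 < p) (hK : 0 < K) (hM : 0 < M)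
    (h : M ^ p ≤ Real.log (1 + 1 / q)) : psipNorm p (bmu q (K * M)) (fun x => x) ≤ K := by
  unfold psipNorm
  apply csInf_le ⟨0, fun l hl => hl.1.le⟩
  refine ⟨hK, ?_⟩
  unfold bmu
  rw [lintegral_add_measure, lintegral_smul_measure, lintegral_smul_measure, lintegral_dirac,
    lintegral_dirac]
  rw [abs_of_pos (by positivity), Real.mul_rpow hK.le hM.le, abs_zero, Real.zero_rpow hp.ne',
    zero_div, Real.exp_zero, mul_div_cancel_left₀ _ (by positivity)]
  have h1 : Real.exp (M ^ p) ≤ 1 + 1 / q := by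
    rw [← Real.le_log_iff_exp_le (by positivity)]; exact h
  rw [smul_eq_mul, smul_eq_mul, ← ENNReal.ofReal_mul hq0.le, ← ENNReal.ofReal_mul (by linarith),
    ← ENNReal.ofReal_add (by positivity) (by linarith)]
  rw [show (2 : ℝ≥0∞) = ENNReal.ofReal 2 by simp]
  apply ENNReal.ofReal_le_ofReal
  have := mul_le_mul_of_nonneg_left h1 hq0.le
  have e : q * (1 + 1 / q) = q + 1 := by field_simp
  linarith

lemma exp_big : (512 : ℝ) ≤ Real.exp 64 := by
  have h : Real.exp 9 = Real.exp 3 ^ 3 := by rw [← Real.exp_nat_mul]; norm_num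
  have h2 : (8 : ℝ) ^ 3 ≤ Real.exp 3 ^ 3 := pow_le_pow_left₀ (by norm_num) exp_three 3
  have h3 : Real.exp 9 ≤ Real.exp 64 := Real.exp_le_exp.2 (by norm_num)
  rw [h] at h3
  linarith

/-- choice of the parameter `k` -/
lemma choose_k {n : ℕ} {p s C : ℝ} (hC : 512 ≤ C) (hn : C ≤ n) (hp1 : 1 ≤ p) (hp2 : p ≤ 2)
    (hs : 0 < s) (hsn : s * C ^ 2 ≤ n) :
    ∃ k : ℕ, 1 ≤ k ∧ 64 * k ≤ n ∧
      (k : ℝ) ≤ 4 * (s / Real.log (2 + n / s) ^ (2 / p)) + 1 ∧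
      s ≤ (Real.log (1 + n / (4 * k)) ^ (1 / p)) ^ 2 * k := by
  have hnpos : (0 : ℝ) < n := by linarith
  have hp0 : 0 < p := by linarith
  have hx : 512 ^ 2 ≤ (n : ℝ) / s := by
    rw [le_div_iff₀ hs]
    have : (512 : ℝ) ^ 2 ≤ C ^ 2 := pow_le_pow_left₀ (by norm_num) hC 2
    nlinarith
  have he1 := Real.exp_one_lt_d9
  set x := (n : ℝ) / s with hxd
  set L := Real.log (2 + x) with hL
  have hL4 : 4 ≤ L := by
    rw [hL, Real.le_log_iff_exp_le (by linarith)]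
    have : Real.exp 4 = Real.exp 1 ^ 4 := by rw [← Real.exp_nat_mul]; norm_num
    rw [this]
    calc Real.exp 1 ^ 4 ≤ 3 ^ 4 := pow_le_pow_left₀ (Real.exp_pos _).le (by linarith) 4
      _ ≤ _ := by linarith
  have h2p : 1 ≤ 2 / p := by rw [le_div_iff₀ hp0]; linarith
  have hLL : L ≤ L ^ (2 / p) := by
    calc L = L ^ (1 : ℝ) := (Real.rpow_one L).symm
      _ ≤ _ := Real.rpow_le_rpow_of_exponent_le (by linarith) h2p
  set R := L ^ (2 / p) with hR
  have hRpos : 0 < R := by linarith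
  rcases le_or_gt s 1 with h1 | h1
  · refine ⟨1, le_rfl, ?_, ?_, ?_⟩
    · have : (64 : ℝ) ≤ n := by linarith
      exact_mod_cast this
    · have : 0 ≤ s / R := by positivity
      push_cast; linarith
    · have hl : 1 ≤ Real.log (1 + n / (4 * (1 : ℕ))) := by
        rw [Real.le_log_iff_exp_le (by positivity)]
        push_cast; linarith
      have := Real.one_le_rpow hl (by positivity : 0 ≤ 1 / p)
      push_cast at this ⊢
      nlinarith
  · set u := s / R with hu
    have hupos : 0 < u := by positivity
    have hus : 4 * u ≤ s := by
      rw [hu, ← mul_div_assoc, div_le_iff₀ hRpos]; nlinarith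
    have hk1 : 1 ≤ ⌈4 * u⌉₊ := Nat.one_le_iff_ne_zero.2 (Nat.ceil_pos.2 (by linarith)).ne'
    have hku : (⌈4 * u⌉₊ : ℝ) ≤ 4 * u + 1 := (Nat.ceil_lt_add_one (by linarith)).le
    have huk : 4 * u ≤ (⌈4 * u⌉₊ : ℝ) := Nat.le_ceil _
    set k := ⌈4 * u⌉₊ with hk
    have hkpos : (1 : ℝ) ≤ k := by exact_mod_cast hk1
    have hks : (k : ℝ) ≤ 2 * s := by linarith
    have hns : (n : ℝ) = x * s := by rw [hxd]; field_simp
    refine ⟨k, hk1, ?_, hku, ?_⟩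
    · have : (64 * k : ℝ) ≤ n := by rw [hns]; nlinarith
      exact_mod_cast this
    · set l := Real.log (1 + n / (4 * k)) with hl
      have hx8 : x / 8 ≤ n / (4 * k) := by
        rw [le_div_iff₀ (by linarith), hns]; nlinarith
      have hlL : L ≤ 2 * l := by
        have : L ≤ Real.log ((1 + n / (4 * k)) ^ 2) := by
          apply Real.log_le_log (by linarith)
          nlinarith
        rw [Real.log_pow] at this
        push_cast at this
        exact this
      have hl0 : 0 ≤ l := by linarith
      have e1 : (l ^ (1 / p)) ^ 2 = l ^ (2 / p) := by
        rw [← Real.rpow_natCast, ← Real.rpow_mul hl0]; congr 1; push_cast; ring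
      rw [e1]
      have e2 : R ≤ 4 * l ^ (2 / p) := by
        calc R ≤ (2 * l) ^ (2 / p) := Real.rpow_le_rpow (by linarith) hlL (by positivity)
          _ = 2 ^ (2 / p) * l ^ (2 / p) := Real.mul_rpow (by norm_num) hl0
          _ ≤ 4 * l ^ (2 / p) := by
            gcongr
            calc (2 : ℝ) ^ (2 / p) ≤ 2 ^ (2 : ℝ) := by
                  apply Real.rpow_le_rpow_of_exponent_le (by norm_num)
                  rw [div_le_iff₀ hp0]; linarith
              _ = 4 := by norm_num
      have e3 : s = R * u := by rw [hu]; field_simp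
      have e4 : 0 ≤ l ^ (2 / p) := by positivity
      calc s = R * u := e3
        _ ≤ 4 * l ^ (2 / p) * u := by gcongr
        _ = l ^ (2 / p) * (4 * u) := by ring
        _ ≤ _ := by gcongr

theorem norm_example_two_sided :
    ∃ C : ℝ, 1 < C ∧
      ∀ n : ℕ, C ≤ n → ∀ p : ℝ, p ∈ Set.Icc (1 : ℝ) 2 → ∀ K : ℝ, 0 < K →
      ∀ t : ℝ, 0 ≤ t → t ≤ K / C * Real.sqrt n →
      -- the random vector `X` is the identity on `Fin n → ℝ` equipped with the
      -- i.i.d. product measure `Measure.pi (fun _ => μ)`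
      ∃ μ : Measure ℝ, IsProbabilityMeasure μ ∧ psipNorm p μ (fun x => x) ≤ K ∧
      ∃ m : ℝ, IsMedian (Measure.pi fun _ : Fin n => μ) (fun x => euclNorm x) m ∧
        ENNReal.ofReal (C⁻¹ * Real.exp
            (-(C * t ^ 2 / (K ^ 2 * Real.log (2 + K ^ 2 * n / t ^ 2) ^ ((2 : ℝ) / p))))) ≤
          (Measure.pi fun _ : Fin n => μ) {x | t ≤ euclNorm x - m} ∧
        ENNReal.ofReal (C⁻¹ * Real.exp
            (-(C * t ^ 2 / (K ^ 2 * Real.log (2 + K ^ 2 * n / t ^ 2) ^ ((2 : ℝ) / p))))) ≤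
          (Measure.pi fun _ : Fin n => μ) {x | euclNorm x - m ≤ -t} := by
  have hC := exp_big
  refine ⟨Real.exp 64, by linarith, ?_⟩
  intro n hn p hp K hK t ht htn
  obtain ⟨hp1, hp2⟩ := hp
  have hp0 : 0 < p := by linarith
  rcases ht.eq_or_lt with h0 | htpos
  · subst h0
    refine ⟨Measure.dirac 0, inferInstance, ?_, 0, ?_⟩
    · unfold psipNorm
      apply csInf_le ⟨0, fun l hl => hl.1.le⟩
      refine ⟨hK, ?_⟩
      rw [lintegral_dirac]
      simp [Real.zero_rpow hp0.ne']
    · have hz : euclNorm (fun _ : Fin n => (0 : ℝ)) = 0 := by simp [euclNorm]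
      have h1 : ∀ A : Set (Fin n → ℝ), (fun _ => (0 : ℝ)) ∈ A →
          1 ≤ (Measure.pi fun _ : Fin n => Measure.dirac (0 : ℝ)) A := by
        intro A hA
        have : (Measure.pi fun _ : Fin n => Measure.dirac (0 : ℝ)) {fun _ => (0 : ℝ)} = 1 := by
          rw [← Set.univ_pi_singleton, Measure.pi_pi]
          simp
        rw [← this]
        exact measure_mono (Set.singleton_subset_iff.2 hA)
      have h2 : ENNReal.ofReal ((Real.exp 64)⁻¹ * Real.exp
            (-(Real.exp 64 * 0 ^ 2 / (K ^ 2 * Real.log (2 + K ^ 2 * n / 0 ^ 2) ^ ((2 : ℝ) / p)))))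
          ≤ 1 := by
        rw [ENNReal.ofReal_le_one]
        simp
        exact inv_le_one_of_one_le₀ (by linarith)
      have h3 : (2⁻¹ : ℝ≥0∞) ≤ 1 := by simp
      exact ⟨⟨h3.trans (h1 _ (by simp [hz])), h3.trans (h1 _ (by simp [hz]))⟩,
        h2.trans (h1 _ (by simp [hz])), h2.trans (h1 _ (by simp [hz]))⟩
  set C := Real.exp 64 with hCd
  have hCpos : 0 < C := by linarith
  have hnpos : (0 : ℝ) < n := by linarith
  set s := t ^ 2 / K ^ 2 with hs
  have hspos : 0 < s := by positivity
  have hsn : s * C ^ 2 ≤ n := by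
    have h1 : t * C ≤ K * Real.sqrt n := by
      have := mul_le_mul_of_nonneg_right htn hCpos.le
      calc t * C ≤ K / C * Real.sqrt n * C := this
        _ = _ := by field_simp
    have h2 := pow_le_pow_left₀ (by positivity) h1 2
    rw [mul_pow, mul_pow, Real.sq_sqrt hnpos.le] at h2
    rw [hs, div_mul_eq_mul_div, div_le_iff₀ (by positivity)]
    linarith
  obtain ⟨k, hk1, hkn, hku, hsk⟩ := choose_k hC hn hp1 hp2 hspos hsn
  have hxe : K ^ 2 * n / t ^ 2 = n / s := by rw [hs]; field_simp
  rw [hxe]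
  have hk' : (1 : ℝ) ≤ k := by exact_mod_cast hk1
  have hkn' : (64 * k : ℝ) ≤ n := by exact_mod_cast hkn
  set l := Real.log (1 + n / (4 * k)) with hl
  have hlpos : 0 < l := Real.log_pos (by
    have : (0 : ℝ) < n / (4 * k) := by positivity
    linarith)
  set M := l ^ (1 / p) with hM
  have hMpos : 0 < M := by positivity
  have hMp : M ^ p = l := by
    rw [hM, ← Real.rpow_mul hlpos.le, one_div_mul_cancel hp0.ne', Real.rpow_one]
  have htM : t ≤ K * M * Real.sqrt k := by
    refine (sq_le_sq₀ ht (by positivity)).1 ?_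
    rw [mul_pow, Real.sq_sqrt (by positivity), mul_pow, mul_assoc]
    rwa [hs, div_le_iff₀' (by positivity)] at hsk
  have hq0 : 0 < 4 * (k : ℝ) / n := by positivity
  have hq1 : 4 * (k : ℝ) / n ≤ 1 := by rw [div_le_one hnpos]; linarith
  obtain ⟨m, hm, hA, hB⟩ := core hk1 hkn (mul_pos hK hMpos) htM
  have key : ENNReal.ofReal (C⁻¹ * Real.exp
      (-(C * t ^ 2 / (K ^ 2 * Real.log (2 + n / s) ^ ((2 : ℝ) / p))))) ≤
      ENNReal.ofReal (Real.exp (-(64 * k))) := by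
    apply ENNReal.ofReal_le_ofReal
    have e : C * t ^ 2 / (K ^ 2 * Real.log (2 + n / s) ^ ((2 : ℝ) / p))
        = C * (s / Real.log (2 + n / s) ^ ((2 : ℝ) / p)) := by
      rw [hs, div_div, mul_div_assoc]
    rw [e]
    have hlog : 0 ≤ Real.log (2 + n / s) := Real.log_nonneg (by
      have : (0 : ℝ) < n / s := by positivity
      linarith)
    have hu : 0 ≤ s / Real.log (2 + n / s) ^ ((2 : ℝ) / p) := by positivity
    set u := s / Real.log (2 + n / s) ^ ((2 : ℝ) / p)
    have : C⁻¹ = Real.exp (-64) := by rw [hCd, Real.exp_neg]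
    rw [this, ← Real.exp_add]
    apply Real.exp_le_exp.2
    nlinarith
  refine ⟨bmu (4 * (k : ℝ) / n) (K * M), bmu_prob hq0.le hq1, ?_, m, hm, key.trans hA,
    key.trans hB⟩
  apply psip_le hq0 hq1 hp0 hK hMpos
  rw [hMp, hl, one_div_div]
end

section
/- There exist universal constants c_b > 0 and C_b > 1 so that the following holds. Let n be a sufficiently large integer (n greater than a universal constant), let θ ∈ [1/(c_b·n), c_b], and let Y_1,…,Y_n be i.i.d. Bernoulli random variables with parameter θ. Then for every real r with 0 ≤ r ≤ n − θ·n, one has ℙ{ Σ_{i=1}^n Y_i ≥ θ·n + r } ≥ (1/C_b)·exp( −C_b · log(2 + (θ·n + r)/(θ·n)) · r²/(θ·n + r) ). -/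
open MeasureTheory ENNReal

/-- `μ` is the Bernoulli measure with parameter `θ` (as a measure on `ℝ`):
it is a probability measure giving mass `θ` to `{1}` and mass `1-θ` to `{0}`. -/
def IsBernoulli (μ : Measure ℝ) (θ : ℝ) : Prop :=
  IsProbabilityMeasure μ ∧ μ {1} = ENNReal.ofReal θ ∧ μ {0} = ENNReal.ofReal (1 - θ)

noncomputable def binomP (n : ℕ) (θ : ℝ) (j : ℕ) : ℝ :=
  (n.choose j : ℝ) * θ ^ j * (1 - θ) ^ (n - j)

lemma binomP_nonneg (n : ℕ) (θ : ℝ) (j : ℕ) (h0 : 0 ≤ θ) (h1 : θ ≤ 1) : 0 ≤ binomP n θ j := by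
  have : 0 ≤ 1 - θ := by linarith
  unfold binomP; positivity

lemma binomP_sum (n : ℕ) (θ : ℝ) : ∑ j ∈ Finset.range (n+1), binomP n θ j = 1 := by
  have h := congrArg (Polynomial.eval θ) (bernsteinPolynomial.sum ℝ n)
  simp only [Polynomial.eval_finsetSum, bernsteinPolynomial, Polynomial.eval_mul,
    Polynomial.eval_pow, Polynomial.eval_sub, Polynomial.eval_one, Polynomial.eval_X,
    Polynomial.eval_natCast] at h
  exact h

lemma binomP_var (n : ℕ) (θ : ℝ) :
    ∑ j ∈ Finset.range (n+1), (n * θ - j) ^ 2 * binomP n θ j = n * θ * (1 - θ) := by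
  have h := congrArg (Polynomial.eval θ) (bernsteinPolynomial.variance ℝ n)
  simp only [Polynomial.eval_finsetSum, bernsteinPolynomial, Polynomial.eval_mul,
    Polynomial.eval_pow, Polynomial.eval_sub, Polynomial.eval_one, Polynomial.eval_X,
    Polynomial.eval_natCast, nsmul_eq_mul] at h
  exact h

lemma binomP_window (n : ℕ) (θ : ℝ) (h0 : 0 ≤ θ) (h1 : θ ≤ 1) (hm : 0 < θ * n) :
    3 / 4 ≤ ∑ j ∈ (Finset.range (n+1)).filter (fun j : ℕ => |θ * n - j| ≤ 2 * √(θ * n)),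
      binomP n θ j := by
  have hs := binomP_sum n θ
  have hv := binomP_var n θ
  rw [← Finset.sum_filter_add_sum_filter_not _ (fun j : ℕ => |θ * n - j| ≤ 2 * √(θ * n))] at hs
  have h2 : (4 * (θ * n)) * ∑ j ∈ (Finset.range (n+1)).filter
      (fun j : ℕ => ¬ |θ * n - j| ≤ 2 * √(θ * n)), binomP n θ j ≤ n * θ * (1 - θ) := by
    rw [← hv, Finset.mul_sum]
    refine (Finset.sum_le_sum ?_).trans (Finset.sum_le_sum_of_subset_of_nonneg
      (Finset.filter_subset _ _) (fun j _ _ => mul_nonneg (sq_nonneg _) (binomP_nonneg n θ j h0 h1)))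
    intro j hj
    have hj := (Finset.mem_filter.1 hj).2
    push Not at hj
    refine mul_le_mul_of_nonneg_right ?_ (binomP_nonneg n θ j h0 h1)
    have := Real.sq_sqrt hm.le
    have h3 : (2 * √(θ * n)) ^ 2 ≤ |θ * n - j| ^ 2 := by gcongr
    rw [sq_abs] at h3
    rw [mul_comm (n:ℝ) θ]
    nlinarith
  have h3 : ∑ j ∈ (Finset.range (n+1)).filter
      (fun j : ℕ => ¬ |θ * n - j| ≤ 2 * √(θ * n)), binomP n θ j ≤ 1 / 4 := by
    by_contra hc
    have hc := lt_of_not_ge hc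
    have h5 := mul_lt_mul_of_pos_left hc (by linarith : 0 < 4 * (θ * n))
    nlinarith
  linarith

lemma binomP_succ (n : ℕ) (θ : ℝ) (j : ℕ) (hj : j < n) :
    binomP n θ (j+1) * ((j + 1) * (1 - θ)) = binomP n θ j * ((n - j) * θ) := by
  have h := Nat.choose_succ_right_eq n j
  have h' : (n.choose (j+1) : ℝ) * (j+1) = n.choose j * (n - j) := by
    rw [← Nat.cast_sub hj.le]; exact_mod_cast h
  unfold binomP
  have e : n - j = (n - (j+1)) + 1 := by omega
  rw [e, pow_succ, pow_succ]
  linear_combination θ ^ j * θ * (1 - θ) ^ (n - (j+1)) * (1 - θ) * h'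

/-- shifting by `s` -/
lemma binomP_shift (n : ℕ) (θ : ℝ) (h0 : 0 < θ) (h1 : θ < 1) (j : ℕ) (ρ : ℝ) (x : ℝ) (hρ : 0 ≤ ρ)
    (hxn : x ≤ n) (hx : ρ * (x * (1 - θ)) ≤ (n - x) * θ) (s : ℕ) (hs : (j + s : ℝ) ≤ x) :
    ρ ^ s * binomP n θ j ≤ binomP n θ (j + s) := by
  induction s with
  | zero => simp
  | succ s ih =>
    push_cast at hs
    have hlt : j + s < n := by
      have : ((j + s : ℕ) : ℝ) < n := by push_cast; linarith
      exact_mod_cast this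
    have ih := ih (by linarith)
    have hb := binomP_nonneg n θ (j + s) h0.le h1.le
    have e := binomP_succ n θ (j+s) hlt
    push_cast at e
    have h1' : 0 < 1 - θ := by linarith
    have hpos : 0 < ((j:ℝ) + s + 1) * (1 - θ) := by positivity
    have key : ρ * binomP n θ (j + s) ≤ binomP n θ (j + s + 1) := by
      refine le_of_mul_le_mul_right ?_ hpos
      rw [e]
      have : ρ * (((j:ℝ) + s + 1) * (1 - θ)) ≤ (n - (j + s)) * θ := by
        calc ρ * (((j:ℝ) + s + 1) * (1 - θ)) ≤ ρ * (x * (1 - θ)) := by gcongr; linarith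
          _ ≤ (n - x) * θ := hx
          _ ≤ _ := by gcongr; linarith
      nlinarith
    calc ρ ^ (s+1) * binomP n θ j = ρ * (ρ ^ s * binomP n θ j) := by ring
      _ ≤ ρ * binomP n θ (j+s) := by gcongr
      _ ≤ _ := key

lemma measure_lower (n : ℕ) (θ : ℝ) (h0 : 0 ≤ θ) (h1 : θ ≤ 1) (μ : Measure ℝ)
    (hμ : IsBernoulli μ θ) (y : ℝ) :
    ENNReal.ofReal (∑ j ∈ (Finset.range (n+1)).filter (fun j : ℕ => y ≤ j), binomP n θ j) ≤
      (Measure.pi fun _ : Fin n => μ) {x | y ≤ ∑ i, x i} := by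
  classical
  obtain ⟨hp, hm1, hm0⟩ := hμ
  have h1' : 0 ≤ 1 - θ := by linarith
  let F : Finset (Fin n) → (Fin n → ℝ) := fun A i => if i ∈ A then 1 else 0
  have hF : Function.Injective F := by
    intro A B h
    ext i
    have := congrFun h i
    simp only [F] at this
    by_cases hA : i ∈ A <;> by_cases hB : i ∈ B <;> simp_all
  let T : Finset (Finset (Fin n)) := Finset.univ.powerset.filter (fun A => y ≤ (A.card : ℝ))
  have hsub : ((T.image F : Finset (Fin n → ℝ)) : Set (Fin n → ℝ)) ⊆ {x | y ≤ ∑ i, x i} := by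
    intro x hx
    simp only [Finset.coe_image, Set.mem_image, Finset.mem_coe] at hx
    obtain ⟨A, hA, rfl⟩ := hx
    have := (Finset.mem_filter.1 hA).2
    simpa [F] using this
  refine le_trans ?_ (measure_mono hsub)
  rw [← sum_measure_singleton, Finset.sum_image (fun a _ b _ h => hF h)]
  have hsing : ∀ A : Finset (Fin n), (Measure.pi fun _ : Fin n => μ) {F A} =
      ENNReal.ofReal (θ ^ A.card * (1 - θ) ^ (n - A.card)) := by
    intro A
    rw [Measure.pi_singleton]
    have : ∀ i, μ {F A i} = ENNReal.ofReal (if i ∈ A then θ else 1 - θ) := by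
      intro i
      by_cases h : i ∈ A <;> simp [F, h, hm0, hm1]
    simp_rw [this]
    rw [← ENNReal.ofReal_prod_of_nonneg (by intro i _; split_ifs <;> assumption)]
    congr 1
    rw [Finset.prod_ite]
    simp only [Finset.prod_const]
    congr 2
    · simp
    · rw [Finset.filter_not, Finset.card_sdiff]; simp
  simp_rw [hsing]
  rw [← ENNReal.ofReal_sum_of_nonneg (by intro i _; positivity)]
  apply ENNReal.ofReal_le_ofReal
  apply le_of_eq
  rw [Finset.sum_filter, Finset.sum_filter]
  have := Finset.sum_powerset_apply_card (fun k : ℕ => if y ≤ (k:ℝ) then θ ^ k * (1 - θ) ^ (n - k) else 0)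
    (x := (Finset.univ : Finset (Fin n)))
  rw [this]
  simp only [Finset.card_univ, Fintype.card_fin]
  refine Finset.sum_congr rfl fun j _ => ?_
  split_ifs <;> simp [binomP, mul_assoc]

lemma case_large (n : ℕ) (θ : ℝ) (h0 : 0 < θ) (h1 : θ ≤ 1 / 100) (hn : 0 < (n : ℝ)) (C : ℝ)
    (hC : 100 ≤ C) (r : ℝ) (hr : (n : ℝ) / 4 ≤ r) (hrn : r ≤ n - θ * n) :
    C⁻¹ * Real.exp (-(C * Real.log (2 + (θ * n + r) / (θ * n)) * r ^ 2 / (θ * n + r))) ≤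
      θ ^ n := by
  have hm : 0 < θ * n := by positivity
  have hL0 : 0 ≤ Real.log (1 / θ) := Real.log_nonneg (by rw [le_div_iff₀ h0]; linarith)
  have hL : Real.log (1 / θ) / 2 ≤ Real.log (2 + (θ * n + r) / (θ * n)) := by
    have : Real.log (1 / θ) ≤ 2 * Real.log (2 + (θ * n + r) / (θ * n)) := by
      have e : 2 * Real.log (2 + (θ * n + r) / (θ * n))
          = Real.log ((2 + (θ * n + r) / (θ * n)) ^ 2) := by
        rw [Real.log_pow]; norm_num
      rw [e]
      apply Real.log_le_log (by positivity)
      have h3 : 1 / (4 * θ) ≤ 2 + (θ * n + r) / (θ * n) := by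
        have : 1 / (4 * θ) = (n / 4) / (θ * n) := by field_simp
        rw [this]
        have : (n / 4 : ℝ) / (θ * n) ≤ (θ * n + r) / (θ * n) := by gcongr; linarith
        linarith
      have h4 : 1 / θ ≤ (1 / (4 * θ)) ^ 2 := by
        rw [div_pow, div_le_div_iff₀ (by positivity) (by positivity)]
        nlinarith
      exact h4.trans (by gcongr)
    linarith
  have hq : (n : ℝ) / 16 ≤ r ^ 2 / (θ * n + r) := by
    rw [le_div_iff₀ (by linarith)]
    nlinarith
  have hexp : n * Real.log (1 / θ) ≤
      C * Real.log (2 + (θ * n + r) / (θ * n)) * r ^ 2 / (θ * n + r) := by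
    calc n * Real.log (1 / θ) ≤ 100 * (Real.log (1 / θ) / 2) * (n / 16) := by nlinarith
      _ ≤ C * Real.log (2 + (θ * n + r) / (θ * n)) * (r ^ 2 / (θ * n + r)) := by
        have : 0 ≤ Real.log (2 + (θ * n + r) / (θ * n)) := by linarith
        gcongr
      _ = _ := by ring
  have e : θ ^ n = Real.exp (-(n * Real.log (1 / θ))) := by
    rw [one_div, Real.log_inv, mul_neg, neg_neg, Real.exp_nat_mul, Real.exp_log h0]
  rw [e]
  calc _ ≤ 1 * Real.exp (-(C * Real.log (2 + (θ * n + r) / (θ * n)) * r ^ 2 / (θ * n + r))) := by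
        gcongr
        exact inv_le_one_of_one_le₀ (by linarith)
    _ ≤ _ := by rw [one_mul]; gcongr

lemma rho_bound (m N r t C : ℝ) (s : ℕ) (hm : 100 ≤ m) (hN : m ≤ N) (hr : 0 ≤ r)
    (ht : t = r + 4 * √m + 1) (htN : t ≤ N / 2) (hs : (s : ℝ) ≤ t) (hC : Real.exp 200 ≤ C) :
    C⁻¹ * Real.exp (-(C * Real.log (2 + (m + r) / m) * r ^ 2 / (m + r))) ≤
      ((1 - t / N) * (1 + t / m)⁻¹) ^ s * (3 / 4) := by
  have hm0 : 0 < m := by linarith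
  have hN0 : 0 < N := by linarith
  have hC500 : 1000 ≤ C := by
    refine le_trans ?_ hC
    have h1 : (2:ℝ) ≤ Real.exp 1 := by have := Real.add_one_le_exp (1:ℝ); linarith
    have h2 : Real.exp 200 = Real.exp 1 ^ 200 := by rw [← Real.exp_nat_mul]; norm_num
    rw [h2]
    calc (1000:ℝ) ≤ 2 ^ 200 := by norm_num
      _ ≤ _ := by gcongr
  have hC0 : 0 < C := by linarith
  have hsq : √m ^ 2 = m := Real.sq_sqrt hm0.le
  have hs10 : 10 ≤ √m := by
    rw [show (10:ℝ) = √100 by rw [show (100:ℝ) = 10 ^ 2 by norm_num]; simp]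
    exact Real.sqrt_le_sqrt hm
  have ht0 : 0 < t := by rw [ht]; linarith
  have hx : t / N ≤ 1 / 2 := by rw [div_le_iff₀ hN0]; linarith
  have hx0 : 0 ≤ t / N := by positivity
  have hy0 : 0 ≤ t / m := by positivity
  have hxy : t / N ≤ t / m := by gcongr
  have hpre : C⁻¹ ≤ 3 / 4 := by
    rw [inv_le_comm₀ hC0 (by norm_num)]; linarith
  have hL1 : 1 ≤ Real.log (2 + (m + r) / m) := by
    rw [Real.le_log_iff_exp_le (by positivity)]
    have : 1 ≤ (m + r) / m := by rw [le_div_iff₀ hm0]; linarith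
    have := Real.exp_one_lt_three
    linarith
  have hrho1 : Real.exp (-(3 * (t / m))) ≤ (1 - t / N) * (1 + t / m)⁻¹ := by
    have h1 : Real.exp (-(2 * (t / m))) ≤ 1 - t / N := by
      have : Real.exp (-(2 * (t / m))) ≤ Real.exp (-(2 * (t / N))) := by gcongr
      refine this.trans ?_
      rw [Real.exp_neg, inv_le_comm₀ (Real.exp_pos _) (by linarith)]
      refine le_trans ?_ (Real.add_one_le_exp _)
      rw [inv_le_iff_one_le_mul₀ (by linarith)]
      nlinarith
    have h2 : Real.exp (-(t / m)) ≤ (1 + t / m)⁻¹ := by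
      rw [Real.exp_neg]
      gcongr
      have := Real.add_one_le_exp (t / m); linarith
    calc Real.exp (-(3 * (t / m))) = Real.exp (-(2 * (t / m))) * Real.exp (-(t / m)) := by
          rw [← Real.exp_add]; ring_nf
      _ ≤ _ := by gcongr; linarith
  have hpow1 : Real.exp (-(3 * t ^ 2 / m)) ≤ ((1 - t / N) * (1 + t / m)⁻¹) ^ s := by
    refine le_trans ?_ (pow_le_pow_left₀ (Real.exp_pos _).le hrho1 s)
    rw [← Real.exp_nat_mul]
    apply Real.exp_le_exp.2
    have : s * (3 * (t / m)) ≤ t * (3 * (t / m)) := by gcongr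
    have e : t * (3 * (t / m)) = 3 * t ^ 2 / m := by ring
    linarith
  have hE0 : 0 ≤ C * Real.log (2 + (m + r) / m) * r ^ 2 / (m + r) := by positivity
  rcases le_total r (√m) with hr1 | hr1
  · have htm : 3 * t ^ 2 / m ≤ 108 := by
      rw [div_le_iff₀ hm0]
      have : t ≤ 6 * √m := by linarith
      have : t ^ 2 ≤ (6 * √m) ^ 2 := by gcongr
      nlinarith
    have h1 : Real.exp (-108) ≤ Real.exp (-(3 * t ^ 2 / m)) := by gcongr
    have h2 : C⁻¹ ≤ Real.exp (-108) * (3 / 4) := by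
      calc C⁻¹ ≤ (Real.exp 200)⁻¹ := by gcongr
        _ = Real.exp (-108) * Real.exp (-92) := by rw [← Real.exp_neg, ← Real.exp_add]; norm_num
        _ ≤ _ := by
          gcongr
          rw [Real.exp_neg, inv_le_comm₀ (Real.exp_pos _) (by norm_num)]
          have := Real.add_one_le_exp (92:ℝ); linarith
    calc _ ≤ C⁻¹ * 1 := by
          gcongr
          exact Real.exp_le_one_iff.2 (by linarith)
      _ ≤ Real.exp (-108) * (3 / 4) := by linarith
      _ ≤ _ := by gcongr; exact h1.trans hpow1
  have htr : t ≤ 6 * r := by linarith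
  have hr0 : 0 < r := by linarith
  suffices h : Real.exp (-(C * Real.log (2 + (m + r) / m) * r ^ 2 / (m + r))) ≤
      ((1 - t / N) * (1 + t / m)⁻¹) ^ s by
    rw [mul_comm C⁻¹]
    exact mul_le_mul h hpre (by positivity) ((Real.exp_pos _).le.trans h)
  rcases le_total r m with hr2 | hr2
  · refine le_trans ?_ hpow1
    apply Real.exp_le_exp.2
    apply neg_le_neg
    calc 3 * t ^ 2 / m ≤ 3 * (6 * r) ^ 2 / m := by gcongr
      _ ≤ 1000 * 1 * r ^ 2 / (m + m) := by
        rw [div_le_div_iff₀ hm0 (by linarith)]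
        have : 0 ≤ r ^ 2 * m := by positivity
        nlinarith
      _ ≤ _ := by gcongr
  · have e3 : 2 + (m + r) / m = 3 + r / m := by field_simp; ring
    rw [e3] at hL1 ⊢
    set u := r / m with hu
    have hu0 : 0 ≤ u := by positivity
    have htu : t / m ≤ 6 * u := by
      rw [hu, ← mul_div_assoc]; gcongr
    have hrho2 : Real.exp (-(4 * Real.log (3 + u))) ≤ (1 - t / N) * (1 + t / m)⁻¹ := by
      have e : Real.exp (-(4 * Real.log (3 + u))) = ((3 + u) ^ 4)⁻¹ := by
        rw [Real.exp_neg, show (4:ℝ) = ((4:ℕ):ℝ) by norm_num, Real.exp_nat_mul,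
          Real.exp_log (by positivity)]
      rw [e]
      calc ((3 + u) ^ 4)⁻¹ ≤ (2 * (1 + 6 * u))⁻¹ := by
            gcongr
            have e4 : (3 + u) ^ 4 = 81 + 108 * u + (54 * u^2 + 12 * u ^ 3 + u ^ 4) := by ring
            have : 0 ≤ 54 * u^2 + 12 * u ^ 3 + u ^ 4 := by positivity
            linarith
        _ = (1/2) * (1 + 6 * u)⁻¹ := by rw [mul_inv]; norm_num
        _ ≤ _ := by
          have : 1 / 2 ≤ 1 - t / N := by linarith
          gcongr
    refine le_trans ?_ (pow_le_pow_left₀ (Real.exp_pos _).le hrho2 s)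
    rw [← Real.exp_nat_mul]
    apply Real.exp_le_exp.2
    rw [mul_neg]
    apply neg_le_neg
    calc s * (4 * Real.log (3 + u)) ≤ (6 * r) * (4 * Real.log (3 + u)) := by gcongr; linarith
      _ ≤ 1000 * Real.log (3 + u) * (r / 2) := by nlinarith
      _ ≤ C * Real.log (3 + u) * (r ^ 2 / (m + r)) := by
        gcongr ?_ * _ * ?_
        rw [div_le_div_iff₀ (by norm_num) (by linarith)]
        nlinarith
      _ = _ := by ring

theorem binomial_tail_lower_bound :
    ∃ cb Cb : ℝ, 0 < cb ∧ 1 < Cb ∧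
    ∃ N : ℕ, ∀ n : ℕ, N ≤ n →
      ∀ θ : ℝ, 1 / (cb * n) ≤ θ → θ ≤ cb →
      ∀ μ : Measure ℝ, IsBernoulli μ θ →
      ∀ r : ℝ, 0 ≤ r → r ≤ n - θ * n →
        ENNReal.ofReal (Cb⁻¹ * Real.exp
            (-(Cb * Real.log (2 + (θ * n + r) / (θ * n)) * r ^ 2 / (θ * n + r)))) ≤
          (Measure.pi fun _ : Fin n => μ) {x | θ * n + r ≤ ∑ i, x i} := by
  refine ⟨1 / 100, Real.exp 200, by norm_num, Real.one_lt_exp_iff.2 (by norm_num), 1, ?_⟩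
  intro n hn θ hθ1 hθ2 μ hμ r hr hrn
  have hn0 : (0:ℝ) < n := by exact_mod_cast hn
  have h0 : 0 < θ := lt_of_lt_of_le (by positivity) hθ1
  have hm : 100 ≤ θ * n := by
    rw [div_le_iff₀ (by positivity)] at hθ1
    linarith
  have h1 : θ < 1 := by linarith
  refine le_trans (ENNReal.ofReal_le_ofReal ?_) (measure_lower n θ h0.le h1.le μ hμ (θ * n + r))
  have hb := fun j => binomP_nonneg n θ j h0.le h1.le
  have hm0 : 0 < θ * n := by linarith
  have hmn : θ * n ≤ n / 100 := by nlinarith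
  have hsq : √(θ * n) ^ 2 = θ * n := Real.sq_sqrt hm0.le
  have hs10 : 10 ≤ √(θ * n) := by
    rw [show (10:ℝ) = √100 by rw [show (100:ℝ) = 10 ^ 2 by norm_num]; simp]
    exact Real.sqrt_le_sqrt hm
  have hsm : √(θ * n) ≤ θ * n / 10 := by nlinarith
  set t := r + 4 * √(θ * n) + 1 with ht
  rcases le_total t ((n - θ * n) / 2) with hc | hc
  · set s := ⌈r + 2 * √(θ * n)⌉₊ with hs
    have hs1 : r + 2 * √(θ * n) ≤ s := Nat.le_ceil _
    have hs2 : (s : ℝ) < r + 2 * √(θ * n) + 1 := Nat.ceil_lt_add_one (by positivity)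
    have hNpos : 0 < n - θ * n := by linarith
    have ht0 : 0 < t := by linarith
    have hρ0 : 0 ≤ (1 - t / (n - θ * n)) * (1 + t / (θ * n))⁻¹ := by
      apply mul_nonneg
      · rw [sub_nonneg, div_le_iff₀ hNpos]; linarith
      · positivity
    refine (rho_bound (θ * n) (n - θ * n) r t _ s hm (by linarith) hr ht hc (by linarith)
      le_rfl).trans ?_
    refine (mul_le_mul_of_nonneg_left (binomP_window n θ h0.le h1.le hm0)
      (pow_nonneg hρ0 s)).trans ?_
    rw [Finset.mul_sum]
    calc _ ≤ ∑ j ∈ (Finset.range (n+1)).filter (fun j : ℕ => |θ * n - j| ≤ 2 * √(θ * n)),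
          binomP n θ (j + s) := by
          refine Finset.sum_le_sum fun j hj => ?_
          have hj := abs_le.1 (Finset.mem_filter.1 hj).2
          refine binomP_shift n θ h0 h1 j _ (θ * n + t) hρ0 (by linarith) ?_ s (by linarith)
          have : 0 < θ * n + t := by linarith
          have h1' : (1 - θ) ≠ 0 := by linarith
          apply le_of_eq
          have e1 : 1 - t / (n - θ * n) = (n - (θ * n + t)) / (n - θ * n) := by
            rw [eq_div_iff hNpos.ne', sub_mul, div_mul_cancel₀ _ hNpos.ne']; ring
          have e2 : (1 + t / (θ * n))⁻¹ = θ * n / (θ * n + t) := by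
            rw [← inv_div]; field_simp
          have e3 : (n : ℝ) - θ * n = n * (1 - θ) := by ring
          rw [e1, e2, e3]
          generalize θ * n + t = x at *
          field_simp
      _ = ∑ k ∈ ((Finset.range (n+1)).filter
            (fun j : ℕ => |θ * n - j| ≤ 2 * √(θ * n))).map (addRightEmbedding s),
          binomP n θ k := by
          rw [Finset.sum_map]; rfl
      _ ≤ _ := by
          refine Finset.sum_le_sum_of_subset_of_nonneg ?_ (fun j _ _ => hb j)
          intro k hk
          obtain ⟨j, hj, rfl⟩ := Finset.mem_map.1 hk
          have hj := abs_le.1 (Finset.mem_filter.1 hj).2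
          simp only [addRightEmbedding_apply, Finset.mem_filter, Finset.mem_range]
          constructor
          · have : ((j + s : ℕ) : ℝ) ≤ n := by push_cast; linarith
            have : j + s ≤ n := by exact_mod_cast this
            omega
          · push_cast; linarith
  · have hC : (100:ℝ) ≤ Real.exp 200 := by have := Real.add_one_le_exp (200:ℝ); linarith
    refine (case_large n θ h0 hθ2 hn0 _ hC r (by linarith) hrn).trans ?_
    have e : θ ^ n = binomP n θ n := by simp [binomP]
    rw [e]
    exact Finset.single_le_sum (f := binomP n θ) (fun j _ => hb j)
      (Finset.mem_filter.2 ⟨by simp, by linarith⟩)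
end

section
/- There exist universal constants c_b > 0, C̄ > 1 and C̃ > 1 so that the following holds. Let n be a sufficiently large integer (n greater than a universal constant), let θ ∈ [1/(c_b·n), c_b], and let Y_1,…,Y_n be i.i.d. Bernoulli random variables with parameter θ. Then for every real r with 0 ≤ r ≤ n − θ·n and θ·n + r ∈ ℕ: if r ≥ θ·n/10 then ℙ{ Σ_{i=1}^n Y_i ≥ θ·n + r } ≥ (1/C̄)·exp( −C̄·log(2 + r/(θ·n))·r ), while if 0 ≤ r < θ·n/10 then ℙ{ Σ_{i=1}^n Y_i ≥ θ·n + r } ≥ (1/C̃)·exp( −C̃·r²/(θ·n + r) ). -/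
open MeasureTheory ENNReal

/-- Binomial weight. -/
noncomputable def bw (n : ℕ) (θ : ℝ) (j : ℕ) : ℝ := (n.choose j : ℝ) * θ ^ j * (1 - θ) ^ (n - j)

lemma bw_nonneg {n : ℕ} {θ : ℝ} (h0 : 0 ≤ θ) (h1 : θ ≤ 1) (j : ℕ) : 0 ≤ bw n θ j := by
  have : 0 ≤ 1 - θ := by linarith
  unfold bw; positivity

lemma bw_sum (n : ℕ) (θ : ℝ) : ∑ j ∈ Finset.range (n + 1), bw n θ j = 1 := by
  have h := congrArg (Polynomial.eval θ) (bernsteinPolynomial.sum ℝ n)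
  simpa [Polynomial.eval_finsetSum, bernsteinPolynomial, bw] using h

lemma bw_var (n : ℕ) (θ : ℝ) :
    ∑ j ∈ Finset.range (n + 1), (θ * n - j) ^ 2 * bw n θ j = n * θ * (1 - θ) := by
  have h := congrArg (Polynomial.eval θ) (bernsteinPolynomial.variance ℝ n)
  simp [Polynomial.eval_finsetSum, bernsteinPolynomial] at h
  rw [← h]
  refine Finset.sum_congr rfl fun j _ => ?_
  unfold bw; ring

lemma tail_le_measure (n k : ℕ) (θ : ℝ) (h0 : 0 ≤ θ) (h1 : θ ≤ 1) (μ : Measure ℝ)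
    (hμ : IsBernoulli μ θ) :
    ENNReal.ofReal (∑ j ∈ (Finset.range (n + 1)).filter (fun j => k ≤ j), bw n θ j) ≤
      (Measure.pi fun _ : Fin n => μ) {x | (k : ℝ) ≤ ∑ i, x i} := by
  classical
  obtain ⟨hp, hm1, hm0⟩ := hμ
  have h1' : 0 ≤ 1 - θ := by linarith
  let g : Finset (Fin n) → (Fin n → ℝ) := fun A i => if i ∈ A then 1 else 0
  have hg : Function.Injective g := by
    intro A B h
    ext i
    have := congrFun h i
    by_cases hA : i ∈ A <;> by_cases hB : i ∈ B <;> simp_all [g]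
  have hmass : ∀ A : Finset (Fin n), (Measure.pi fun _ : Fin n => μ) {g A} =
      ENNReal.ofReal (θ ^ A.card * (1 - θ) ^ (n - A.card)) := by
    intro A
    rw [Measure.pi_singleton]
    have : ∀ i, μ {g A i} = ENNReal.ofReal (if i ∈ A then θ else 1 - θ) := by
      intro i
      by_cases hA : i ∈ A <;> simp [g, hA, hm1, hm0]
    simp_rw [this]
    rw [← ENNReal.ofReal_prod_of_nonneg]
    · congr 1
      rw [Finset.prod_ite]
      simp [Finset.filter_not, Finset.card_sdiff]
    · intro i _
      split_ifs <;> assumption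
  let F : Finset (Finset (Fin n)) := (Finset.univ : Finset (Fin n)).powerset.filter (fun A => k ≤ A.card)
  have hsub : ((F.image g : Finset (Fin n → ℝ)) : Set (Fin n → ℝ)) ⊆ {x | (k : ℝ) ≤ ∑ i, x i} := by
    intro x hx
    simp only [Finset.coe_image, Set.mem_image, Finset.mem_coe] at hx
    obtain ⟨A, hA, rfl⟩ := hx
    have := (Finset.mem_filter.1 hA).2
    simpa [g] using this
  refine le_trans (le_of_eq ?_) (measure_mono hsub)
  rw [← sum_measure_singleton, Finset.sum_image (fun a _ b _ h => hg h)]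
  simp_rw [hmass]
  rw [← ENNReal.ofReal_sum_of_nonneg (fun A _ => by positivity)]
  congr 1
  simp only [F]
  rw [Finset.sum_filter, Finset.sum_filter]
  have := Finset.sum_powerset_apply_card (x := (Finset.univ : Finset (Fin n))) (fun j => if k ≤ j then θ ^ j * (1 - θ) ^ (n - j) else 0)
  rw [this]
  simp only [Finset.card_univ, Fintype.card_fin]
  refine Finset.sum_congr rfl fun j _ => ?_
  split_ifs <;> simp [bw, mul_assoc]

lemma choose_lb : ∀ (k n : ℕ), 1 ≤ k → k ≤ n → ((n : ℝ) / k) ^ k ≤ (n.choose k : ℝ) := by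
  intro k
  induction k with
  | zero => intro n h; omega
  | succ k ih =>
    intro n _ hn
    obtain ⟨m, rfl⟩ : ∃ m, n = m + 1 := ⟨n - 1, by omega⟩
    rcases Nat.eq_zero_or_pos k with rfl | hk
    · simp
    have h := ih m hk (by omega)
    have e : ((m + 1).choose (k + 1) : ℝ) = ((m : ℝ) + 1) / (k + 1) * m.choose k := by
      have := Nat.add_one_mul_choose_eq m k
      have h2 : ((m : ℝ) + 1) * m.choose k = (m + 1).choose (k + 1) * (k + 1) := by exact_mod_cast this
      field_simp
      linarith
    rw [e, pow_succ']
    push_cast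
    have hkm : (k : ℝ) ≤ m := by exact_mod_cast (by omega : k ≤ m)
    have hk0 : (0 : ℝ) < k := by exact_mod_cast hk
    have : ((m : ℝ) + 1) / (k + 1) ≤ m / k := by
      rw [div_le_div_iff₀ (by positivity) hk0]; nlinarith
    gcongr
    exact le_trans (pow_le_pow_left₀ (by positivity) this k) h

lemma large_regime (n k : ℕ) (θ r : ℝ) (hn : 1 ≤ n) (h0 : 0 < θ) (h1 : θ ≤ 1 / 100)
    (hk : (k : ℝ) = θ * n + r) (hkn : k ≤ n) (hr : θ * n / 10 ≤ r) :
    Real.exp (-(51 * Real.log (2 + r / (θ * n)) * r)) ≤ bw n θ k := by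
  have hn0 : (0 : ℝ) < n := by exact_mod_cast hn
  have hm : 0 < θ * n := by positivity
  have hr0 : 0 < r := by linarith
  have hk0 : (0 : ℝ) < k := by rw [hk]; linarith
  have hk1 : 1 ≤ k := by exact_mod_cast hk0
  have hL : 0 < 2 + r / (θ * n) := by positivity
  have hA : Real.exp (-(11 * Real.log (2 + r / (θ * n)) * r)) ≤ (θ * n / k) ^ k := by
    have e : θ * n / k = Real.exp (-Real.log (k / (θ * n))) := by
      rw [Real.exp_neg, Real.exp_log (by positivity), inv_div]
    rw [e, ← Real.exp_nat_mul]
    apply Real.exp_le_exp.2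
    have h2 : Real.log (k / (θ * n)) ≤ Real.log (2 + r / (θ * n)) := by
      apply Real.log_le_log (by positivity)
      rw [hk, add_div, div_self hm.ne']; linarith
    have h3 : 0 ≤ Real.log (2 + r / (θ * n)) := Real.log_nonneg (by
      have : 0 ≤ r / (θ * n) := by positivity
      linarith)
    have h4 : (k : ℝ) ≤ 11 * r := by rw [hk]; linarith
    nlinarith [mul_le_mul h4 h2 (Real.log_nonneg (by
      rw [hk, add_div, div_self hm.ne']
      have : 0 ≤ r / (θ * n) := by positivity
      linarith)) (by positivity)]
  have hB : Real.exp (-(40 * Real.log (2 + r / (θ * n)) * r)) ≤ (1 - θ) ^ (n - k) := by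
    have h5 : Real.exp (-(2 * θ)) ≤ 1 - θ := by
      rw [Real.exp_neg]
      have := Real.add_one_le_exp (2 * θ)
      rw [inv_le_iff_one_le_mul₀ (Real.exp_pos _)]
      nlinarith
    have h6 : Real.exp (-(2 * θ)) ^ n ≤ (1 - θ) ^ n := pow_le_pow_left₀ (Real.exp_pos _).le h5 n
    have h7 : (1 - θ) ^ n ≤ (1 - θ) ^ (n - k) :=
      pow_le_pow_of_le_one (by linarith) (by linarith) (by omega)
    refine le_trans ?_ (h6.trans h7)
    rw [← Real.exp_nat_mul]
    apply Real.exp_le_exp.2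
    have h8 : Real.log 2 ≤ Real.log (2 + r / (θ * n)) := by
      apply Real.log_le_log (by norm_num)
      have : 0 ≤ r / (θ * n) := by positivity
      linarith
    have h9 := Real.log_two_gt_d9
    nlinarith
  have hC := choose_lb k n hk1 hkn
  calc _ = Real.exp (-(11 * Real.log (2 + r / (θ * n)) * r)) *
        Real.exp (-(40 * Real.log (2 + r / (θ * n)) * r)) := by
          rw [← Real.exp_add]; congr 1; ring
    _ ≤ (θ * n / k) ^ k * (1 - θ) ^ (n - k) := by gcongr
    _ = ((n : ℝ) / k) ^ k * θ ^ k * (1 - θ) ^ (n - k) := by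
          rw [← mul_pow]; congr 2; ring
    _ ≤ bw n θ k := by
          unfold bw
          have : 0 ≤ 1 - θ := by linarith
          gcongr

lemma bw_step (n i : ℕ) (θ : ℝ) (hi : i < n) :
    bw n θ (i + 1) * ((i + 1) * (1 - θ)) = bw n θ i * ((n - i) * θ) := by
  obtain ⟨d, rfl⟩ : ∃ d, n = i + d + 1 := ⟨n - i - 1, by omega⟩
  have h := Nat.choose_succ_right_eq (i + d + 1) i
  have h' : ((i + d + 1).choose (i + 1) : ℝ) * (i + 1) = (i + d + 1).choose i * (d + 1) := by
    rw [show i + d + 1 - i = d + 1 by omega] at h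
    exact_mod_cast h
  unfold bw
  rw [show i + d + 1 - (i + 1) = d by omega, show i + d + 1 - i = d + 1 by omega]
  push_cast
  calc _ = (((i + d + 1).choose (i + 1) : ℝ) * (i + 1)) * (θ ^ (i + 1) * (1 - θ) ^ (d + 1)) := by ring
    _ = _ := by rw [h']; ring

lemma bw_shift (n : ℕ) (θ q m t : ℝ) (h0 : 0 < θ) (h1 : θ < 1) (hq : 0 ≤ q)
    (hmt : m + t ≤ n) (hstep : q * ((m + t) * (1 - θ)) ≤ (n - (m + t)) * θ) (j : ℕ) :
    ∀ s : ℕ, (j + s : ℝ) ≤ m + t → q ^ s * bw n θ j ≤ bw n θ (j + s) := by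
  intro s
  induction s with
  | zero => intro _; simp
  | succ s ih =>
    intro h
    push_cast at h
    have ih := ih (by linarith)
    have hlt : j + s < n := by
      have : ((j + s + 1 : ℕ) : ℝ) ≤ n := by push_cast; linarith
      have : j + s + 1 ≤ n := by exact_mod_cast this
      omega
    have hs := bw_step n (j + s) θ hlt
    push_cast at hs
    have hb := bw_nonneg (n := n) h0.le h1.le (j + s)
    have hθ : 0 < 1 - θ := by linarith
    have hx : (0 : ℝ) < ((j : ℝ) + s + 1) * (1 - θ) := by positivity
    have key : q * (((j : ℝ) + s + 1) * (1 - θ)) ≤ (n - ((j : ℝ) + s)) * θ := by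
      calc q * (((j : ℝ) + s + 1) * (1 - θ)) ≤ q * ((m + t) * (1 - θ)) := by
            refine mul_le_mul_of_nonneg_left (mul_le_mul_of_nonneg_right ?_ hθ.le) hq
            linarith
        _ ≤ _ := hstep
        _ ≤ _ := by
          refine mul_le_mul_of_nonneg_right ?_ h0.le
          linarith
    have h3 : q * bw n θ (j + s) ≤ bw n θ (j + s + 1) := by
      refine le_of_mul_le_mul_right ?_ hx
      rw [hs]
      nlinarith [mul_le_mul_of_nonneg_left key hb]
    calc q ^ (s + 1) * bw n θ j = q * (q ^ s * bw n θ j) := by ring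
      _ ≤ q * bw n θ (j + s) := by gcongr
      _ ≤ _ := h3

lemma cheb (n : ℕ) (θ : ℝ) (hm : 0 < θ * n) (h0 : 0 < θ) (h1 : θ < 1) :
    1 / 2 ≤ ∑ j ∈ (Finset.range (n + 1)).filter
      (fun j : ℕ => (θ * n - j) ^ 2 ≤ 4 * (θ * n)), bw n θ j := by
  have hs := bw_sum n θ
  have hv := bw_var n θ
  rw [← Finset.sum_filter_add_sum_filter_not _ (fun j : ℕ => (θ * n - j) ^ 2 ≤ 4 * (θ * n))] at hs
  have h2 : 4 * (θ * n) * ∑ j ∈ (Finset.range (n + 1)).filter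
      (fun j : ℕ => ¬ (θ * n - j) ^ 2 ≤ 4 * (θ * n)), bw n θ j ≤ n * θ * (1 - θ) := by
    rw [← hv, Finset.mul_sum]
    refine le_trans (Finset.sum_le_sum (fun j hj => ?_))
      (Finset.sum_le_sum_of_subset_of_nonneg (Finset.filter_subset _ _)
        (fun j _ _ => mul_nonneg (sq_nonneg _) (bw_nonneg h0.le h1.le j)))
    have := (Finset.mem_filter.1 hj).2
    exact mul_le_mul_of_nonneg_right (not_le.1 this).le (bw_nonneg h0.le h1.le j)
  set R := ∑ j ∈ (Finset.range (n + 1)).filter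
      (fun j : ℕ => ¬ (θ * n - j) ^ 2 ≤ 4 * (θ * n)), bw n θ j
  have h3 : R ≤ 1 / 4 := by
    by_contra hc
    push Not at hc
    nlinarith
  linarith

set_option maxHeartbeats 1600000 in
lemma small_regime (n k : ℕ) (θ r : ℝ) (h0 : 0 < θ) (h1 : θ ≤ 1 / 100)
    (hm : 100 ≤ θ * n) (hr0 : 0 ≤ r)
    (hk : (k : ℝ) = θ * n + r) (hr : r < θ * n / 10) :
    1 / 2 * Real.exp (-(4 * r ^ 2 / (θ * n)) - 100) ≤
      ∑ j ∈ (Finset.range (n + 1)).filter (fun j => k ≤ j), bw n θ j := by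
  have hch := cheb n θ (by linarith) h0 (by linarith)
  have hn0 : (0 : ℝ) ≤ n := Nat.cast_nonneg n
  have hmn : 100 * (θ * n) ≤ n := by nlinarith
  have hmn' : θ * (θ * n) ≤ θ * n / 100 := by nlinarith
  have hmdef : ∃ m, m = θ * n := ⟨_, rfl⟩
  obtain ⟨m, hmd⟩ := hmdef
  rw [← hmd] at hch hmn hmn' hm hk hr ⊢
  set w := Real.sqrt m with hw
  have hw2 : w ^ 2 = m := Real.sq_sqrt (by linarith)
  have hw0 : 0 ≤ w := Real.sqrt_nonneg _
  have hw10 : 10 ≤ w := by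
    rw [hw]; apply Real.le_sqrt_of_sq_le; linarith
  set s := ⌈r + 2 * w⌉₊ with hs
  have hs1 : r + 2 * w ≤ s := Nat.le_ceil _
  have hs2 : (s : ℝ) < r + 2 * w + 1 := Nat.ceil_lt_add_one (by positivity)
  set t := r + 4 * w + 1 with ht
  have ht0 : 0 < t := by positivity
  have htm : t ≤ m := by nlinarith
  set q := m / (m + 2 * t) with hq
  have hm0 : 0 < m := by linarith
  have hq0 : 0 ≤ q := by positivity
  have hstep : q * ((m + t) * (1 - θ)) ≤ (n - (m + t)) * θ := by
    rw [hq, div_mul_eq_mul_div, div_le_iff₀ (by positivity)]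
    have e : (n - (m + t)) * θ = m - θ * (m + t) := by linear_combination -hmd
    rw [e]
    have h5 : θ * (m + t) ≤ m / 2 := by nlinarith
    nlinarith [mul_nonneg ht0.le (sub_nonneg.2 h5)]
  have hqe : Real.exp (-(2 * t / m)) ≤ q := by
    have := Real.add_one_le_exp (2 * t / m)
    rw [Real.exp_neg, hq]
    have e : m / (m + 2 * t) = (2 * t / m + 1)⁻¹ := by field_simp; ring
    rw [e]
    gcongr
  have hqs : Real.exp (-(4 * r ^ 2 / m) - 100) ≤ q ^ s := by
    refine le_trans ?_ (pow_le_pow_left₀ (Real.exp_pos _).le hqe s)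
    rw [← Real.exp_nat_mul]
    apply Real.exp_le_exp.2
    have hst : (s : ℝ) ≤ t := by linarith
    have h6 : (s : ℝ) * (2 * t) ≤ 4 * r ^ 2 + 100 * m := by
      have h7 : (s : ℝ) * (2 * t) ≤ 2 * t ^ 2 := by nlinarith
      have h8 : t ≤ r + 5 * w := by linarith
      have h9 : t ^ 2 ≤ (r + 5 * w) ^ 2 := by gcongr
      nlinarith [sq_nonneg (r - 5 * w)]
    have h10 : (s : ℝ) * (2 * t) / m ≤ 4 * r ^ 2 / m + 100 := by
      rw [div_add' _ _ _ hm0.ne']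
      gcongr
    have : (s : ℝ) * -(2 * t / m) = -((s : ℝ) * (2 * t) / m) := by ring
    rw [this]; linarith
  set G := (Finset.range (n + 1)).filter (fun j : ℕ => (m - j) ^ 2 ≤ 4 * m) with hG
  have hGb : ∀ j ∈ G, m - 2 * w ≤ (j : ℝ) ∧ (j : ℝ) ≤ m + 2 * w := by
    intro j hj
    have h := (Finset.mem_filter.1 hj).2
    have h' : (m - j) ^ 2 ≤ (2 * w) ^ 2 := by rw [mul_pow, hw2]; linarith
    have := abs_le_of_sq_le_sq' h' (by positivity)
    constructor <;> linarith [this.1, this.2]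
  calc 1 / 2 * Real.exp (-(4 * r ^ 2 / m) - 100) ≤ (∑ j ∈ G, bw n θ j) * q ^ s :=
        mul_le_mul hch hqs (Real.exp_pos _).le (by linarith)
    _ = ∑ j ∈ G, q ^ s * bw n θ j := by rw [mul_comm, Finset.mul_sum]
    _ ≤ ∑ j ∈ G, bw n θ (j + s) := by
        refine Finset.sum_le_sum fun j hj => ?_
        refine bw_shift n θ q m t h0 (by linarith) hq0 (by linarith) hstep j s ?_
        linarith [(hGb j hj).2]
    _ = ∑ j ∈ G.image (fun j => j + s), bw n θ j := by
        rw [Finset.sum_image (fun a _ b _ h => by simpa using h)]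
    _ ≤ _ := by
        refine Finset.sum_le_sum_of_subset_of_nonneg ?_ (fun j _ _ => bw_nonneg h0.le (by linarith) j)
        intro x hx
        obtain ⟨j, hj, rfl⟩ := Finset.mem_image.1 hx
        have := hGb j hj
        refine Finset.mem_filter.2 ⟨Finset.mem_range.2 ?_, ?_⟩
        · have : ((j + s : ℕ) : ℝ) ≤ n := by push_cast; linarith
          have : j + s ≤ n := by exact_mod_cast this
          omega
        · have : (k : ℝ) ≤ ((j + s : ℕ) : ℝ) := by push_cast; linarith
          exact_mod_cast this

theorem binomial_tail_lower_bound_integer_points :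
    ∃ cb Cbar Ctil : ℝ, 0 < cb ∧ 1 < Cbar ∧ 1 < Ctil ∧
    ∃ N : ℕ, ∀ n : ℕ, N ≤ n →
      ∀ θ : ℝ, 1 / (cb * n) ≤ θ → θ ≤ cb →
      ∀ μ : Measure ℝ, IsBernoulli μ θ →
      ∀ r : ℝ, 0 ≤ r → r ≤ n - θ * n → (∃ k : ℕ, (k : ℝ) = θ * n + r) →
        (θ * n / 10 ≤ r →
          ENNReal.ofReal (Cbar⁻¹ * Real.exp (-(Cbar * Real.log (2 + r / (θ * n)) * r))) ≤
            (Measure.pi fun _ : Fin n => μ) {x | θ * n + r ≤ ∑ i, x i}) ∧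
        (r < θ * n / 10 →
          ENNReal.ofReal (Ctil⁻¹ * Real.exp (-(Ctil * r ^ 2 / (θ * n + r)))) ≤
            (Measure.pi fun _ : Fin n => μ) {x | θ * n + r ≤ ∑ i, x i}) := by
  refine ⟨1 / 100, 51, 2 * Real.exp 100, by norm_num, by norm_num, ?_, 1, ?_⟩
  · have := Real.add_one_le_exp (100 : ℝ); linarith
  intro n hn θ hθ1 hθ2 μ hμ r hr0 hrn ⟨k, hk⟩
  have hn0 : (0 : ℝ) < n := by exact_mod_cast hn
  have hm : 100 ≤ θ * n := by
    rw [div_le_iff₀ (by positivity)] at hθ1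
    linarith
  have h0 : 0 < θ := by
    by_contra hc
    push Not at hc
    nlinarith
  have hT := tail_le_measure n k θ h0.le (by linarith) μ hμ
  rw [hk] at hT
  have hkn : k ≤ n := by
    have : (k : ℝ) ≤ n := by linarith
    exact_mod_cast this
  constructor
  · intro hr
    refine le_trans (ENNReal.ofReal_le_ofReal ?_) hT
    have h := large_regime n k θ r hn h0 hθ2 hk hkn hr
    have h2 : bw n θ k ≤ ∑ j ∈ (Finset.range (n + 1)).filter (fun j => k ≤ j), bw n θ j :=
      Finset.single_le_sum (f := fun j => bw n θ j)
        (fun j _ => bw_nonneg h0.le (by linarith) j) (by simp; omega)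
    refine le_trans ?_ (h.trans h2)
    have := Real.exp_pos (-(51 * Real.log (2 + r / (θ * n)) * r))
    linarith
  · intro hr
    refine le_trans (ENNReal.ofReal_le_ofReal ?_) hT
    have h := small_regime n k θ r h0 hθ2 hm hr0 hk hr
    refine le_trans ?_ h
    rw [mul_inv, ← Real.exp_neg, mul_assoc, ← Real.exp_add, one_div]
    gcongr
    have hE := Real.add_one_le_exp (100 : ℝ)
    have : 4 * r ^ 2 / (θ * n) ≤ 2 * Real.exp 100 * r ^ 2 / (θ * n + r) := by
      rw [div_le_div_iff₀ (by linarith) (by linarith)]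
      have h1 : 4 * (θ * n + r) ≤ 2 * Real.exp 100 * (θ * n) := by nlinarith
      nlinarith [mul_le_mul_of_nonneg_left h1 (sq_nonneg r)]
    linarith
end

section
/- There exist universal constants c_b > 0 and C̃_b > 1 so that the following holds. Let n be a sufficiently large integer (n greater than a universal constant), let α > 0, and let θ ∈ [1/(c_b·n), c_b]. Let Y_1,…,Y_n be i.i.d. Bernoulli random variables with parameter θ, and set X = (X_1,…,X_n) with X_i = α·Y_i for each i. Then for every median m of ‖X‖₂ and every t ∈ [0, α·√n/4], one has ℙ{ ‖X‖₂ ≥ m + t } ≥ (1/C̃_b)·exp( −C̃_b · log(2 + t²/(θ·n·α²)) · t²/α² ). -/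
open MeasureTheory ENNReal

noncomputable def binW (n : ℕ) (θ : ℝ) (j : ℕ) : ℝ := (n.choose j : ℝ) * θ ^ j * (1 - θ) ^ (n - j)

lemma binW_eval (n : ℕ) (θ : ℝ) (j : ℕ) : (bernsteinPolynomial ℝ n j).eval θ = binW n θ j := by
  simp [bernsteinPolynomial, binW]

lemma binW_nonneg (n : ℕ) (θ : ℝ) (j : ℕ) (h0 : 0 ≤ θ) (h1 : θ ≤ 1) : 0 ≤ binW n θ j := by
  have : 0 ≤ 1 - θ := by linarith
  unfold binW; positivity

lemma binW_sum (n : ℕ) (θ : ℝ) : ∑ j ∈ Finset.range (n + 1), binW n θ j = 1 := by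
  have h := congrArg (Polynomial.eval θ) (bernsteinPolynomial.sum ℝ n)
  simpa [Polynomial.eval_finsetSum, binW_eval] using h

lemma binW_mean (n : ℕ) (θ : ℝ) :
    ∑ j ∈ Finset.range (n + 1), (j : ℝ) * binW n θ j = n * θ := by
  have h := congrArg (Polynomial.eval θ) (bernsteinPolynomial.sum_smul ℝ n)
  simpa [Polynomial.eval_finsetSum, binW_eval] using h

lemma binW_var (n : ℕ) (θ : ℝ) :
    ∑ j ∈ Finset.range (n + 1), (n * θ - (j : ℝ)) ^ 2 * binW n θ j = n * θ * (1 - θ) := by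
  have h := congrArg (Polynomial.eval θ) (bernsteinPolynomial.variance ℝ n)
  simpa [Polynomial.eval_finsetSum, binW_eval] using h

open Classical in
lemma binW_cheb (n : ℕ) (θ : ℝ) (h0 : 0 ≤ θ) (h1 : θ ≤ 1) (hp : 0 < n * θ) (P : ℕ → Prop)
    (hP : ∀ j : ℕ, |n * θ - (j : ℝ)| ≤ 2 * √(n * θ) → P j) :
    3 / 4 ≤ ∑ j ∈ Finset.range (n + 1), if P j then binW n θ j else 0 := by
  have key : ∀ j ∈ Finset.range (n + 1),
      binW n θ j - (n * θ - (j : ℝ)) ^ 2 * binW n θ j / (4 * (n * θ))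
        ≤ if P j then binW n θ j else 0 := by
    intro j _
    have hb := binW_nonneg n θ j h0 h1
    split_ifs with h
    · have : 0 ≤ (n * θ - (j : ℝ)) ^ 2 * binW n θ j / (4 * (n * θ)) := by positivity
      linarith
    · have h2 : 2 * √(n * θ) < |n * θ - (j : ℝ)| := by
        by_contra hc
        exact h (hP j (not_lt.mp hc))
      have h3 : 4 * (n * θ) ≤ (n * θ - (j : ℝ)) ^ 2 := by
        rw [← sq_abs (n * θ - (j : ℝ))]
        have := Real.sq_sqrt hp.le
        have := Real.sqrt_nonneg (n * θ)
        nlinarith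
      have : binW n θ j ≤ (n * θ - (j : ℝ)) ^ 2 * binW n θ j / (4 * (n * θ)) := by
        rw [le_div_iff₀ (by positivity)]
        nlinarith
      linarith
  refine le_trans ?_ (Finset.sum_le_sum key)
  rw [Finset.sum_sub_distrib, binW_sum, ← Finset.sum_div, binW_var]
  have : n * θ * (1 - θ) / (4 * (n * θ)) = (1 - θ) / 4 := by
    rw [mul_comm (4 : ℝ), mul_div_mul_left _ _ hp.ne']
  rw [this]; linarith

open Classical in
lemma tilt (I : Finset ℕ) (b b' l : ℕ → ℝ) (A : ℕ → Prop) (K : ℝ) (hK : 0 ≤ K)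
    (hb' : ∀ j ∈ I, 0 ≤ b' j) (hbb : ∀ j ∈ I, b j = b' j * Real.exp (-l j))
    (hs : ∑ j ∈ I, b j ≤ 1) (hA : 1 / 2 ≤ ∑ j ∈ I, if A j then b' j else 0)
    (hl : ∑ j ∈ I, b' j * l j ≤ K) :
    1 / 2 * Real.exp (-(2 * K + 2)) ≤ ∑ j ∈ I, if A j then b j else 0 := by
  have h1 : ∑ j ∈ I, (if A j then b' j * l j else 0) ≤ K + 1 := by
    have : ∑ j ∈ I, (if A j then b' j * l j else 0) ≤ ∑ j ∈ I, (b' j * l j + b j) := by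
      apply Finset.sum_le_sum
      intro j hj
      rw [hbb j hj]
      have := hb' j hj
      have h2 := Real.add_one_le_exp (-l j)
      have h3 := Real.exp_pos (-l j)
      split_ifs
      · have : 0 ≤ b' j * Real.exp (-l j) := by positivity
        linarith
      · nlinarith
    rw [Finset.sum_add_distrib] at this
    linarith
  set T := 2 * K + 2 with hT
  have key : ∀ j ∈ I, Real.exp (-T) * ((1 + T) * (if A j then b' j else 0)
      - (if A j then b' j * l j else 0)) ≤ if A j then b j else 0 := by
    intro j hj
    split_ifs
    · rw [hbb j hj]
      have := hb' j hj
      have h2 := Real.add_one_le_exp (T - l j)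
      have h3 : Real.exp (-l j) = Real.exp (-T) * Real.exp (T - l j) := by
        rw [← Real.exp_add]; ring_nf
      rw [h3]
      have : Real.exp (-T) * (b' j * (T - l j + 1))
          ≤ Real.exp (-T) * (b' j * Real.exp (T - l j)) := by gcongr
      linarith
    · simp
  refine le_trans ?_ (Finset.sum_le_sum key)
  rw [← Finset.mul_sum, Finset.sum_sub_distrib, ← Finset.mul_sum, mul_comm]
  gcongr
  nlinarith

lemma kl_bound (n a s : ℝ) (ha : 10 ≤ a) (hs : 0 ≤ s) (hpn : a ^ 2 ≤ n / 100)
    (hq : (a + 3 + s) ^ 2 ≤ n / 4) :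
    (a + 3 + s) ^ 2 * Real.log ((a + 3 + s) ^ 2 / a ^ 2)
      + (n - (a + 3 + s) ^ 2) * Real.log ((n - (a + 3 + s) ^ 2) / (n - a ^ 2))
      ≤ 324 + 72 * (Real.log (2 + s ^ 2 / a ^ 2) * s ^ 2) := by
  have hp : 0 < a ^ 2 := by positivity
  have hn : 0 < n := by linarith
  set p := a ^ 2 with hpd
  set q := (a + 3 + s) ^ 2 with hqd
  have hqp : p ≤ q := by rw [hpd, hqd]; gcongr; linarith
  have hq0 : 0 < q := by linarith
  have hL : 1 / 2 ≤ Real.log (2 + s ^ 2 / p) := by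
    have h1 : Real.log 2 ≤ Real.log (2 + s ^ 2 / p) := by
      apply Real.log_le_log (by norm_num)
      have : 0 ≤ s ^ 2 / p := by positivity
      linarith
    have := Real.log_two_gt_d9
    linarith
  set L := Real.log (2 + s ^ 2 / p) with hLd
  have hsec : (n - q) * Real.log ((n - q) / (n - p)) ≤ -(q - p) + (q - p) ^ 2 / (n - p) := by
    have h1 : Real.log ((n - q) / (n - p)) ≤ (n - q) / (n - p) - 1 :=
      Real.log_le_sub_one_of_pos (div_pos (by linarith) (by linarith))
    have h2 : (n - q) * Real.log ((n - q) / (n - p)) ≤ (n - q) * ((n - q) / (n - p) - 1) :=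
      mul_le_mul_of_nonneg_left h1 (by linarith)
    have h3 : (n - q) * ((n - q) / (n - p) - 1) = -(q - p) + (q - p) ^ 2 / (n - p) := by
      have : n - p ≠ 0 := by linarith
      field_simp; ring
    linarith
  rcases le_total (3 + s) a with hc | hc
  · have h1 : q * Real.log (q / p) ≤ q * (q / p - 1) :=
      mul_le_mul_of_nonneg_left (Real.log_le_sub_one_of_pos (by positivity)) hq0.le
    have h2 : q * (q / p - 1) = (q - p) + (q - p) ^ 2 / p := by
      have := hp.ne'
      field_simp
      try ring
    have h3 : (q - p) ^ 2 / (n - p) ≤ (q - p) ^ 2 / p := by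
      gcongr; linarith
    have h4 : q - p ≤ 3 * (3 + s) * a := by rw [hpd, hqd]; nlinarith
    have h5 : (q - p) ^ 2 / p ≤ 9 * (3 + s) ^ 2 := by
      rw [div_le_iff₀ hp]
      calc (q - p) ^ 2 ≤ (3 * (3 + s) * a) ^ 2 := by gcongr
        _ = _ := by rw [hpd]; ring
    have h6 : s ^ 2 * (1 / 2) ≤ s ^ 2 * L := by gcongr
    nlinarith [sq_nonneg (s - 3)]
  · have h1 : -(q - p) + (q - p) ^ 2 / (n - p) ≤ 0 := by
      have : (q - p) ^ 2 / (n - p) ≤ q - p := by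
        rw [div_le_iff₀ (by linarith)]
        nlinarith
      linarith
    have h2 : q ≤ 16 * s ^ 2 := by
      rw [hqd]
      have : (a + 3 + s) ^ 2 ≤ (4 * s) ^ 2 := by gcongr; linarith
      linarith
    have h3 : Real.log (q / p) ≤ 4 * L := by
      have : 4 * L = Real.log ((2 + s ^ 2 / p) ^ 4) := by rw [Real.log_pow, hLd]; norm_num
      rw [this]
      apply Real.log_le_log (by positivity)
      have hx : 0 ≤ s ^ 2 / p := by positivity
      have : q / p ≤ 16 * (s ^ 2 / p) := by
        rw [← mul_div_assoc]; gcongr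
      nlinarith [sq_nonneg (s ^ 2 / p), pow_nonneg hx 3, pow_nonneg hx 4]
    have h4 : q * Real.log (q / p) ≤ 16 * s ^ 2 * (4 * L) := by
      calc q * Real.log (q / p) ≤ q * (4 * L) := by gcongr
        _ ≤ _ := by gcongr
    have : 0 ≤ L * s ^ 2 := by positivity
    linarith

open Classical in
lemma pi_lower (n : ℕ) (θ : ℝ) (h0 : 0 ≤ θ) (h1 : θ ≤ 1) (μ : Measure ℝ) (hμ : IsBernoulli μ θ)
    (P : ℕ → Prop) (E : Set (Fin n → ℝ))
    (hE : ∀ s : Finset (Fin n), P s.card → (fun i => if i ∈ s then (1 : ℝ) else 0) ∈ E) :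
    ENNReal.ofReal (∑ j ∈ Finset.range (n + 1), if P j then binW n θ j else 0)
      ≤ (Measure.pi fun _ : Fin n => μ) E := by
  obtain ⟨hpr, hm1, hm0⟩ := hμ
  have h1' : 0 ≤ 1 - θ := by linarith
  let x : Finset (Fin n) → (Fin n → ℝ) := fun s i => if i ∈ s then (1 : ℝ) else 0
  have hx : Function.Injective x := by
    intro s t h
    ext i
    have := congrFun h i
    by_cases hs : i ∈ s <;> by_cases ht : i ∈ t <;> simp_all [x]
  have hmx : ∀ s, (Measure.pi fun _ : Fin n => μ) {x s}
      = ENNReal.ofReal (θ ^ s.card * (1 - θ) ^ (n - s.card)) := by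
    intro s
    rw [Measure.pi_singleton]
    have : ∀ i, μ {x s i} = if i ∈ s then ENNReal.ofReal θ else ENNReal.ofReal (1 - θ) := by
      intro i
      by_cases hi : i ∈ s <;> simp [x, hi, hm1, hm0]
    simp_rw [this]
    rw [Finset.prod_ite]
    simp only [Finset.prod_const]
    have e1 : (Finset.univ.filter (fun i => i ∈ s)) = s := by ext; simp
    have e2 : (Finset.univ.filter (fun i => i ∉ s)) = sᶜ := by ext; simp
    rw [e1, e2, Finset.card_compl, Fintype.card_fin, ENNReal.ofReal_mul (by positivity),
      ENNReal.ofReal_pow h0, ENNReal.ofReal_pow h1']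
  let F : Finset (Finset (Fin n)) := Finset.univ.filter (fun s => P s.card)
  have hsub : ((F.image x : Finset (Fin n → ℝ)) : Set (Fin n → ℝ)) ⊆ E := by
    intro y hy
    simp only [Finset.coe_image, Set.mem_image, Finset.mem_coe, F, Finset.mem_filter] at hy
    obtain ⟨s, hs, rfl⟩ := hy
    exact hE s hs.2
  refine le_trans (le_of_eq ?_) (measure_mono hsub)
  rw [← sum_measure_singleton, Finset.sum_image (fun _ _ _ _ h => hx h)]
  simp_rw [hmx]
  rw [← ENNReal.ofReal_sum_of_nonneg (fun _ _ => by positivity)]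
  congr 1
  rw [Finset.sum_filter]
  have := Finset.sum_powerset_apply_card (x := (Finset.univ : Finset (Fin n)))
    (fun j => if P j then θ ^ j * (1 - θ) ^ (n - j) else 0)
  rw [Finset.powerset_univ] at this
  rw [this, Finset.card_univ, Fintype.card_fin]
  apply Finset.sum_congr rfl
  intro j _
  split_ifs <;> simp [binW, mul_assoc]

open Classical in
lemma euclNorm_ind (n : ℕ) (α : ℝ) (hα : 0 < α) (s : Finset (Fin n)) :
    euclNorm (fun i => α * (if i ∈ s then (1 : ℝ) else 0)) = α * √(s.card : ℝ) := by
  unfold euclNorm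
  have : ∀ i, (α * (if i ∈ s then (1 : ℝ) else 0)) ^ 2 = α ^ 2 * (if i ∈ s then (1 : ℝ) else 0) := by
    intro i; split_ifs <;> simp
  simp_rw [this]
  rw [← Finset.mul_sum, Real.sqrt_mul (by positivity), Real.sqrt_sq hα.le]
  simp

lemma median_le (n : ℕ) (α : ℝ) (hα : 0 < α) (θ : ℝ) (h0 : 0 ≤ θ) (h1 : θ ≤ 1) (hp : 0 < n * θ)
    (μ : Measure ℝ) (hμ : IsBernoulli μ θ) (m : ℝ)
    (hm : IsMedian (Measure.pi fun _ : Fin n => μ) (fun y => euclNorm (fun i => α * y i)) m) :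
    m ≤ α * (√(n * θ) + 1) := by
  by_contra hc
  push Not at hc
  haveI := hμ.1
  have hmeas : Measurable (fun y : Fin n → ℝ => euclNorm (fun i => α * y i)) := by
    unfold euclNorm
    fun_prop
  have hset : MeasurableSet {y : Fin n → ℝ | m ≤ euclNorm (fun i => α * y i)} :=
    measurableSet_le measurable_const hmeas
  have hlow := pi_lower n θ h0 h1 μ hμ (fun j => α * √(j : ℝ) < m)
    {y : Fin n → ℝ | m ≤ euclNorm (fun i => α * y i)}ᶜ (by
      intro s hs
      simp only [Set.mem_compl_iff, Set.mem_ofPred_eq, not_le]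
      rw [euclNorm_ind n α hα s]
      exact hs)
  have hch := binW_cheb n θ h0 h1 hp (fun j => α * √(j : ℝ) < m) (by
      intro j hj
      refine lt_of_le_of_lt ?_ hc
      gcongr
      apply Real.sqrt_le_iff.mpr
      have h2 := Real.sq_sqrt hp.le
      have h3 := Real.sqrt_nonneg (n * θ)
      refine ⟨by linarith, ?_⟩
      have := (abs_le.mp hj).1
      nlinarith)
  have h4 := (ENNReal.ofReal_le_ofReal hch).trans hlow
  rw [prob_compl_eq_one_sub hset] at h4
  have h5 : (1 : ENNReal) - (Measure.pi fun _ : Fin n => μ)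
      {y : Fin n → ℝ | m ≤ euclNorm (fun i => α * y i)} ≤ 1 - 2⁻¹ :=
    tsub_le_tsub_left hm.1 1
  have h6 := h4.trans h5
  rw [ENNReal.one_sub_inv_two] at h6
  have h7 : (2⁻¹ : ENNReal) = ENNReal.ofReal (1 / 2) := by
    rw [one_div, ENNReal.ofReal_inv_of_pos (by norm_num)]; simp
  rw [h7, ENNReal.ofReal_le_ofReal_iff (by norm_num)] at h6
  norm_num at h6

lemma binW_tilt (n : ℕ) (θ η : ℝ) (h0 : 0 < θ) (h1 : θ < 1) (g0 : 0 < η) (g1 : η < 1) (j : ℕ)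
    (hj : j ≤ n) : binW n θ j = binW n η j *
      Real.exp (-((j : ℝ) * Real.log (η / θ) + (n - (j : ℝ)) * Real.log ((1 - η) / (1 - θ)))) := by
  have a1 : 0 < 1 - θ := by linarith
  have a2 : 0 < 1 - η := by linarith
  have e : -((j : ℝ) * Real.log (η / θ) + (n - (j : ℝ)) * Real.log ((1 - η) / (1 - θ)))
      = (j : ℝ) * Real.log (θ / η) + ((n - j : ℕ) : ℝ) * Real.log ((1 - θ) / (1 - η)) := by
    rw [Nat.cast_sub hj, ← inv_div θ η, ← inv_div (1 - θ) (1 - η), Real.log_inv, Real.log_inv]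
    ring
  rw [e, Real.exp_add, Real.exp_nat_mul, Real.exp_nat_mul, Real.exp_log (by positivity),
    Real.exp_log (by positivity)]
  unfold binW
  rw [div_pow, div_pow]
  field_simp

set_option maxHeartbeats 2000000 in
theorem uptail_norm_scaled_bernoulli :
    ∃ cb Cb : ℝ, 0 < cb ∧ 1 < Cb ∧
    ∃ N : ℕ, ∀ n : ℕ, N ≤ n →
      ∀ α : ℝ, 0 < α →
      ∀ θ : ℝ, 1 / (cb * n) ≤ θ → θ ≤ cb →
      ∀ μ : Measure ℝ, IsBernoulli μ θ →
      -- `X = (α Y₁, …, α Yₙ)` where `Y` is the identity on the i.i.d. Bernoulli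
      -- product space
      ∀ m : ℝ, IsMedian (Measure.pi fun _ : Fin n => μ)
          (fun y => euclNorm (fun i => α * y i)) m →
      ∀ t : ℝ, 0 ≤ t → t ≤ α * Real.sqrt n / 4 →
        ENNReal.ofReal (Cb⁻¹ * Real.exp
            (-(Cb * Real.log (2 + t ^ 2 / (θ * n * α ^ 2)) * t ^ 2 / α ^ 2))) ≤
          (Measure.pi fun _ : Fin n => μ) {y | m + t ≤ euclNorm (fun i => α * y i)} := by
  classical
  refine ⟨1 / 100, 2 * Real.exp 650, by norm_num, ?_, 1, ?_⟩
  · have := Real.add_one_le_exp (650 : ℝ)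
    linarith
  intro n hn α hα θ hθ1 hθ2 μ hμ m hm t ht0 ht1
  have hn0 : (0 : ℝ) < n := by exact_mod_cast hn
  have hp100 : 100 ≤ n * θ := by
    rw [div_le_iff₀ (by positivity)] at hθ1
    linarith
  have hθ0 : 0 < θ := by
    by_contra hc
    nlinarith
  have hp : 0 < n * θ := by linarith
  have hmed := median_le n α hα θ hθ0.le (by linarith) hp μ hμ m hm
  set a := √(n * θ) with had
  have ha2 : a ^ 2 = n * θ := Real.sq_sqrt hp.le
  have ha0 : 0 ≤ a := Real.sqrt_nonneg _
  have ha : 10 ≤ a := by nlinarith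
  set r := √(n : ℝ) with hrd
  have hr2 : r ^ 2 = n := Real.sq_sqrt hn0.le
  have hr0 : 0 ≤ r := Real.sqrt_nonneg _
  have har : a ≤ r / 10 := by
    have h : a ^ 2 ≤ (r / 10) ^ 2 := by
      rw [ha2, div_pow, hr2]; nlinarith
    exact (abs_le_of_sq_le_sq' h (by positivity)).2
  obtain ⟨s, hsd⟩ : ∃ s, s = t / α := ⟨_, rfl⟩
  have hts : t = α * s := by rw [hsd]; field_simp
  have hs0 : 0 ≤ s := by rw [hsd]; positivity
  have hsr : s ≤ r / 4 := by
    rw [hts, mul_div_assoc] at ht1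
    exact le_of_mul_le_mul_left ht1 hα
  have hq : (a + 3 + s) ^ 2 ≤ n / 4 := by
    have : (a + 3 + s) ^ 2 ≤ (r / 2) ^ 2 := by
      gcongr; linarith
    nlinarith
  have hK := kl_bound n a s ha hs0 (by rw [ha2]; nlinarith) hq
  set η := (a + 3 + s) ^ 2 / n with hηd
  have hnη : n * η = (a + 3 + s) ^ 2 := by rw [hηd]; field_simp
  have hη0 : 0 < η := by positivity
  have hη1 : η ≤ 1 / 4 := by
    rw [hηd, div_le_iff₀ hn0]; linarith
  have hsη : √(n * η) = a + 3 + s := by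
    rw [hnη]; exact Real.sqrt_sq (by positivity)
  have hL0 : 0 ≤ Real.log (2 + s ^ 2 / a ^ 2) := by
    apply Real.log_nonneg
    have : 0 ≤ s ^ 2 / a ^ 2 := by positivity
    linarith
  have hch := binW_cheb n η hη0.le (by linarith) (by positivity)
    (fun j => m + t ≤ α * √(j : ℝ)) (by
      intro j hj
      rw [hsη, hnη] at hj
      have h2 := (abs_le.mp hj).2
      have h3 : a + 1 + s ≤ √(j : ℝ) := by
        apply Real.le_sqrt_of_sq_le
        nlinarith
      have : α * (a + 1 + s) ≤ α * √(j : ℝ) := by gcongr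
      rw [hts]
      linarith)
  have htilt := tilt (Finset.range (n + 1)) (binW n θ) (binW n η)
    (fun j => (j : ℝ) * Real.log (η / θ) + (n - (j : ℝ)) * Real.log ((1 - η) / (1 - θ)))
    (fun j => m + t ≤ α * √(j : ℝ)) (324 + 72 * (Real.log (2 + s ^ 2 / a ^ 2) * s ^ 2))
    (by positivity) (fun j _ => binW_nonneg n η j hη0.le (by linarith))
    (fun j hj => binW_tilt n θ η hθ0 (by linarith) hη0 (by linarith) j
      (Nat.lt_succ_iff.mp (Finset.mem_range.mp hj)))
    (binW_sum n θ).le (by linarith) (by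
      refine le_trans (le_of_eq ?_) hK
      have e1 : ∑ j ∈ Finset.range (n + 1), binW n η j *
          ((j : ℝ) * Real.log (η / θ) + (n - (j : ℝ)) * Real.log ((1 - η) / (1 - θ)))
          = (∑ j ∈ Finset.range (n + 1), (j : ℝ) * binW n η j) *
              (Real.log (η / θ) - Real.log ((1 - η) / (1 - θ)))
            + (∑ j ∈ Finset.range (n + 1), binW n η j) * (n * Real.log ((1 - η) / (1 - θ))) := by
        rw [Finset.sum_mul, Finset.sum_mul, ← Finset.sum_add_distrib]
        apply Finset.sum_congr rfl
        intro j _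
        ring
      rw [e1, binW_sum, binW_mean, ← hnη, ha2]
      have e2 : n * η / (n * θ) = η / θ := by field_simp
      have e3 : (n - n * η) / (n - n * θ) = (1 - η) / (1 - θ) := by
        rw [← mul_one_sub, ← mul_one_sub, mul_div_mul_left _ _ hn0.ne']
      rw [e2, e3]
      ring)
  have hpi := pi_lower n θ hθ0.le (by linarith) μ hμ (fun j => m + t ≤ α * √(j : ℝ))
    {y | m + t ≤ euclNorm (fun i => α * y i)} (by
      intro S hS
      simp only [Set.mem_ofPred_eq]
      rw [euclNorm_ind n α hα S]
      exact hS)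
  refine le_trans (ENNReal.ofReal_le_ofReal ?_) hpi
  refine le_trans ?_ htilt
  have e4 : t ^ 2 / (θ * n * α ^ 2) = s ^ 2 / a ^ 2 := by
    rw [ha2, hts]; field_simp
  have e5 : 2 * Real.exp 650 * Real.log (2 + s ^ 2 / a ^ 2) * t ^ 2 / α ^ 2
      = 2 * Real.exp 650 * (Real.log (2 + s ^ 2 / a ^ 2) * s ^ 2) := by
    rw [hts]; field_simp
  rw [e4, e5, mul_inv, mul_assoc, ← Real.exp_neg, ← Real.exp_add, one_div]
  gcongr
  have h650 := Real.add_one_le_exp (650 : ℝ)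
  have hX : 0 ≤ Real.log (2 + s ^ 2 / a ^ 2) * s ^ 2 := by positivity
  nlinarith
end

section
/- Let n ≥ 1, let μ_1,…,μ_{n+1} be Borel probability measures on ℝ, let A ⊆ ℝ^{n+1} be non-empty, and for α ∈ ℝ set A(α) := {v ∈ ℝ^n : (v,α) ∈ A}. Let X = (X_1,…,X_{n+1}) be distributed according to μ_1 × ⋯ × μ_{n+1} and let X' = (X_1,…,X_n). Fix κ > 0 and let h : ℝ → ℝ ∪ {−∞} be any function satisfying h(x) ≤ log( 1 / 𝔼_{X'} exp( κ·(dist^c(X', A(x)))² ) ) for all x ∈ ℝ. Define H(t,y) := min over λ ∈ [0,1] of ( −λ·h(t) − (1−λ)·h(y) + κ·(1−λ)²·(y−t)² ). Then 𝔼 exp( κ·(dist^c(X,A))² ) ≤ 𝔼 [ inf_{y ∈ ℝ} exp( H(X_{n+1}, y) ) ]. Moreover, H(t,y) = −h(y) + κ·(y−t)² if h(y) − h(t) ≥ 2κ·(y−t)²; H(t,y) = −h(t) − (h(y) − h(t))²/(4κ·(y−t)²) if 0 ≤ h(y) − h(t) ≤ 2κ·(y−t)²; and H(t,y) = −h(t)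 if h(y) − h(t) ≤ 0. -/
open MeasureTheory ENNReal

/-- The modified convex distance, valued in `ℝ≥0∞`:
`dist^c(x,A) = sup_{‖a‖₂ = 1} inf_{y ∈ A} ∑ i, a i * |x i - y i|`,
with the convention `dist^c(x,∅) = +∞`. -/
noncomputable def distcE {n : ℕ} (x : Fin n → ℝ) (A : Set (Fin n → ℝ)) : ℝ≥0∞ :=
  ⨆ a : {a : Fin n → ℝ // euclNorm a = 1},
    ⨅ y : A, ENNReal.ofReal (∑ i, a.1 i * |x i - (y : Fin n → ℝ) i|)

/-- Extension of `x ↦ exp x` to `ℝ≥0∞`, sending `∞` to `∞`. -/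
noncomputable def eexp (x : ℝ≥0∞) : ℝ≥0∞ :=
  if x = ⊤ then ⊤ else ENNReal.ofReal (Real.exp x.toReal)

/-- Extension of `x ↦ exp x` to `EReal`, sending `⊥` to `0` and `⊤` to `∞`. -/
noncomputable def eexpE (x : EReal) : ℝ≥0∞ :=
  if x = ⊤ then ⊤ else if x = ⊥ then 0 else ENNReal.ofReal (Real.exp x.toReal)

/-- Extension of the logarithm to `ℝ≥0∞`, valued in `EReal`. -/
noncomputable def elog (x : ℝ≥0∞) : EReal :=
  if x = 0 then ⊥ else if x = ⊤ then ⊤ else ((Real.log x.toReal : ℝ) : EReal)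

/-- `H(t,y) = min_{λ ∈ [0,1]} ( -λ·h(t) - (1-λ)·h(y) + κ·(1-λ)²·(y-t)² )`, computed in
the extended reals to allow `h` to take the value `-∞`. -/
noncomputable def Hfun (κ : ℝ) (h : ℝ → EReal) (t y : ℝ) : EReal :=
  ⨅ l : Set.Icc (0 : ℝ) 1,
    (-(((l : ℝ) : EReal) * h t) - (((1 - (l : ℝ)) : ℝ) : EReal) * h y +
      ((κ * (1 - (l : ℝ)) ^ 2 * (y - t) ^ 2 : ℝ) : EReal))


lemma eexp_eq (x : ℝ≥0∞) : eexp x = EReal.exp (x : EReal) := by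
  unfold eexp
  split_ifs with hx
  · simp [hx]
  · lift x to NNReal using hx
    rfl

lemma eexpE_eq (x : EReal) : eexpE x = EReal.exp x := by
  unfold eexpE
  induction x <;> simp

lemma elog_eq (x : ℝ≥0∞) : elog x = ENNReal.log x := rfl

lemma eexp_mono {x y : ℝ≥0∞} (hxy : x ≤ y) : eexp x ≤ eexp y := by
  rw [eexp_eq, eexp_eq]
  exact EReal.exp_monotone (by exact_mod_cast hxy)

lemma eexp_ofReal {x : ℝ} (hx : 0 ≤ x) :
    eexp (ENNReal.ofReal x) = ENNReal.ofReal (Real.exp x) := by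
  simp [eexp, ENNReal.toReal_ofReal hx]

lemma one_le_eexp (x : ℝ≥0∞) : 1 ≤ eexp x := by
  rw [eexp_eq, EReal.one_le_exp_iff]
  exact EReal.coe_ennreal_nonneg x

lemma measurable_eexp : Measurable eexp := by
  have : eexp = fun x : ℝ≥0∞ => EReal.exp (x : EReal) := funext eexp_eq
  rw [this]
  exact EReal.measurable_exp.comp measurable_coe_ennreal_ereal

lemma abs_le_one_of_euclNorm {n : ℕ} {a : Fin n → ℝ} (ha : euclNorm a = 1) (i : Fin n) :
    |a i| ≤ 1 := by
  have h1 : ∑ i, (a i) ^ 2 = 1 := by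
    unfold euclNorm at ha
    rwa [Real.sqrt_eq_one] at ha
  have h2 : (a i) ^ 2 ≤ 1 := by
    rw [← h1]
    exact Finset.single_le_sum (f := fun i => (a i) ^ 2) (fun i _ => sq_nonneg _)
      (Finset.mem_univ i)
  exact (sq_le_one_iff_abs_le_one _).1 h2

lemma continuous_distcE {n : ℕ} (A : Set (Fin n → ℝ)) :
    Continuous (fun x => distcE x A) := by
  refine continuous_of_le_add_edist (n : ℝ≥0∞) (by simp) fun x z => ?_
  unfold distcE
  refine iSup_le fun a => ?_
  refine le_trans ?_ (add_le_add_left (le_iSup _ a) _)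
  rw [ENNReal.iInf_add]
  refine le_iInf fun y => (iInf_le _ y).trans ?_
  have : (n : ℝ≥0∞) * edist x z = ENNReal.ofReal (n * dist x z) := by
    rw [ENNReal.ofReal_mul (by positivity), edist_dist]; simp
  rw [this]
  refine le_trans (ENNReal.ofReal_le_ofReal ?_) ENNReal.ofReal_add_le
  have h3 : (n : ℝ) * dist x z = ∑ i : Fin n, dist x z := by simp
  rw [h3, ← Finset.sum_add_distrib]
  refine Finset.sum_le_sum fun i _ => ?_
  have h4 := abs_le_one_of_euclNorm a.2 i
  have h5 : |x i - z i| ≤ dist x z := by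
    rw [← Real.dist_eq]; exact dist_le_pi_dist x z i
  have h6 : abs (|x i - y.1 i| - |z i - y.1 i|) ≤ |x i - z i| := by
    have := abs_abs_sub_abs_le (x i - y.1 i) (z i - y.1 i)
    simpa using this
  have h7 : a.1 i * (|x i - y.1 i| - |z i - y.1 i|) ≤ 1 * dist x z := by
    refine (le_abs_self _).trans ?_
    rw [abs_mul]
    exact mul_le_mul h4 (h6.trans h5) (abs_nonneg _) zero_le_one
  linarith

lemma distcE_empty {n : ℕ} (hn : 1 ≤ n) (x : Fin n → ℝ) : distcE x ∅ = ⊤ := by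
  unfold distcE
  have : euclNorm (Pi.single (⟨0, hn⟩ : Fin n) (1 : ℝ)) = 1 := by
    unfold euclNorm
    rw [Real.sqrt_eq_one, Finset.sum_eq_single (⟨0, hn⟩ : Fin n)]
    · simp
    · intro b _ hb
      simp [hb]
    · simp
  rw [eq_top_iff]
  refine le_trans ?_ (le_iSup _ ⟨_, this⟩)
  simp

lemma iInf_le_mul_distcE {n : ℕ} (x : Fin n → ℝ) (A : Set (Fin n → ℝ)) (hA : A.Nonempty)
    (a : Fin n → ℝ) {D : ℝ} (hD : distcE x A ≤ ENNReal.ofReal D) :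
    (⨅ y : A, ENNReal.ofReal (∑ i, a i * |x i - (y : Fin n → ℝ) i|)) ≤
      ENNReal.ofReal (euclNorm a * D) := by
  have hr : 0 ≤ euclNorm a := Real.sqrt_nonneg _
  rcases hr.eq_or_lt with h0 | hpos
  · obtain ⟨y, hy⟩ := hA
    have hz : ∀ i, a i = 0 := by
      have h1 : ∑ i, (a i) ^ 2 = 0 := by
        have := h0.symm
        unfold euclNorm at this
        rwa [Real.sqrt_eq_zero (Finset.sum_nonneg fun i _ => sq_nonneg _)] at this
      intro i
      rw [Finset.sum_eq_zero_iff_of_nonneg (fun i _ => sq_nonneg _)] at h1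
      simpa using h1 i (Finset.mem_univ i)
    refine (iInf_le _ ⟨y, hy⟩).trans ?_
    simp [hz]
  · set r := euclNorm a with hrdef
    have hsq : ∑ i, (a i) ^ 2 = r ^ 2 := by
      rw [hrdef]; unfold euclNorm
      rw [Real.sq_sqrt (Finset.sum_nonneg fun i _ => sq_nonneg _)]
    have hu : euclNorm (fun i => a i / r) = 1 := by
      unfold euclNorm
      rw [Real.sqrt_eq_one]
      simp only [div_pow]
      rw [← Finset.sum_div, hsq]
      field_simp
    have h1 : (⨅ y : A, ENNReal.ofReal (∑ i, (a i / r) * |x i - (y : Fin n → ℝ) i|)) ≤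
        ENNReal.ofReal D :=
      (le_iSup (fun a : {a : Fin n → ℝ // euclNorm a = 1} =>
        ⨅ y : A, ENNReal.ofReal (∑ i, a.1 i * |x i - (y : Fin n → ℝ) i|)) ⟨_, hu⟩).trans hD
    rw [ENNReal.ofReal_mul hr]
    refine le_trans ?_ (mul_le_mul_right h1 _)
    rw [ENNReal.mul_iInf_of_ne (by simpa using hpos) (by simp)]
    refine le_iInf fun y => (iInf_le _ y).trans ?_
    rw [← ENNReal.ofReal_mul hr, Finset.mul_sum]
    refine ENNReal.ofReal_le_ofReal (le_of_eq (Finset.sum_congr rfl fun i _ => ?_))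
    field_simp

lemma iInf_snoc_le {n : ℕ} (v : Fin n → ℝ) (t x : ℝ) (A : Set (Fin (n + 1) → ℝ))
    (hA : {u : Fin n → ℝ | Fin.snoc u x ∈ A}.Nonempty)
    (a : Fin (n + 1) → ℝ) {D : ℝ} (hD0 : 0 ≤ D)
    (hD : distcE v {u : Fin n → ℝ | Fin.snoc u x ∈ A} ≤ ENNReal.ofReal D) :
    (⨅ y : A, ENNReal.ofReal (∑ i, a i *
        |(Fin.snoc v t : Fin (n + 1) → ℝ) i - (y : Fin (n + 1) → ℝ) i|)) ≤
      ENNReal.ofReal (euclNorm (fun i : Fin n => a i.castSucc) * D +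
        |a (Fin.last n)| * |x - t|) := by
  have hr : 0 ≤ euclNorm (fun i : Fin n => a i.castSucc) := Real.sqrt_nonneg _
  rw [ENNReal.ofReal_add (by positivity) (by positivity)]
  refine le_trans ?_ (add_le_add_left
    (iInf_le_mul_distcE v _ hA (fun i : Fin n => a i.castSucc) hD) _)
  rw [ENNReal.iInf_add]
  refine le_iInf fun u => (iInf_le _ ⟨_, u.2⟩).trans ?_
  refine le_trans (ENNReal.ofReal_le_ofReal ?_) ENNReal.ofReal_add_le
  rw [Fin.sum_univ_castSucc]
  simp only [Fin.snoc_castSucc, Fin.snoc_last]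
  rw [abs_sub_comm t x]
  gcongr
  exact le_abs_self _

lemma distcE_snoc_le {n : ℕ} (v : Fin n → ℝ) (t y l : ℝ) (A : Set (Fin (n + 1) → ℝ))
    (hl0 : 0 ≤ l) (hl1 : l ≤ 1) {D E : ℝ} (hD0 : 0 ≤ D) (hE0 : 0 ≤ E)
    (hD : 0 < l → {u : Fin n → ℝ | Fin.snoc u t ∈ A}.Nonempty ∧
      distcE v {u : Fin n → ℝ | Fin.snoc u t ∈ A} ≤ ENNReal.ofReal D)
    (hE : l < 1 → {u : Fin n → ℝ | Fin.snoc u y ∈ A}.Nonempty ∧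
      distcE v {u : Fin n → ℝ | Fin.snoc u y ∈ A} ≤ ENNReal.ofReal E) :
    distcE (Fin.snoc v t : Fin (n + 1) → ℝ) A ≤
      ENNReal.ofReal (Real.sqrt ((l * D + (1 - l) * E) ^ 2 + ((1 - l) * |y - t|) ^ 2)) := by
  refine iSup_le fun a => ?_
  obtain ⟨a, ha⟩ := a
  have h1 := fun h => iInf_snoc_le v t t A (hD h).1 a hD0 (hD h).2
  have h2 := fun h => iInf_snoc_le v t y A (hE h).1 a hE0 (hE h).2
  simp only
  set B := (⨅ y : A, ENNReal.ofReal (∑ i, a i *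
        |(Fin.snoc v t : Fin (n + 1) → ℝ) i - (y : Fin (n + 1) → ℝ) i|)) with hB
  set r := euclNorm (fun i : Fin n => a i.castSucc) with hr
  set s := |a (Fin.last n)| with hs
  have hr0 : 0 ≤ r := Real.sqrt_nonneg _
  have hs0 : 0 ≤ s := abs_nonneg _
  have hrs : r ^ 2 + s ^ 2 = 1 := by
    have h3 : ∑ i, (a i) ^ 2 = 1 := by
      unfold euclNorm at ha
      rwa [Real.sqrt_eq_one] at ha
    rw [Fin.sum_univ_castSucc] at h3
    rw [hr, hs, sq_abs]
    unfold euclNorm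
    rw [Real.sq_sqrt (Finset.sum_nonneg fun i _ => sq_nonneg _)]
    exact h3
  have hBt : B ≠ ⊤ := by
    rcases hl0.eq_or_lt with h0 | h0
    · exact ne_top_of_le_ne_top ENNReal.ofReal_ne_top (h2 (by linarith))
    · exact ne_top_of_le_ne_top ENNReal.ofReal_ne_top (h1 h0)
  rw [← ENNReal.ofReal_toReal hBt]
  refine ENNReal.ofReal_le_ofReal ?_
  have k1 : l * B.toReal ≤ l * (r * D) := by
    rcases hl0.eq_or_lt with h0 | h0
    · simp [← h0]
    · have := ENNReal.toReal_le_of_le_ofReal (by positivity) (h1 h0)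
      simp only [sub_self, abs_zero, mul_zero, add_zero] at this
      exact mul_le_mul_of_nonneg_left this hl0
  have k2 : (1 - l) * B.toReal ≤ (1 - l) * (r * E + s * |y - t|) := by
    rcases hl1.eq_or_lt with h0 | h0
    · simp [h0]
    · have := ENNReal.toReal_le_of_le_ofReal (by positivity) (h2 h0)
      exact mul_le_mul_of_nonneg_left this (by linarith)
  refine Real.le_sqrt_of_sq_le ?_
  set P := l * D + (1 - l) * E with hP
  set Q := (1 - l) * |y - t| with hQ
  have k3 : B.toReal ≤ r * P + s * Q := by
    rw [hP, hQ]; linarith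
  have k4 : 0 ≤ B.toReal := ENNReal.toReal_nonneg
  calc B.toReal ^ 2 ≤ (r * P + s * Q) ^ 2 := by gcongr
    _ ≤ (r ^ 2 + s ^ 2) * (P ^ 2 + Q ^ 2) := by nlinarith [sq_nonneg (r * Q - s * P)]
    _ = P ^ 2 + Q ^ 2 := by rw [hrs, one_mul]

lemma eexp_rpow {κ l : ℝ} (hκ : 0 < κ) (d : ℝ≥0∞) (h : l = 0 ∨ d ≠ ⊤) :
    eexp (ENNReal.ofReal κ * d ^ 2) ^ l = ENNReal.ofReal (Real.exp (l * (κ * d.toReal ^ 2))) := by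
  rcases h with rfl | h
  · simp
  · have : ENNReal.ofReal κ * d ^ 2 = ENNReal.ofReal (κ * d.toReal ^ 2) := by
      rw [ENNReal.ofReal_mul hκ.le, ENNReal.ofReal_pow ENNReal.toReal_nonneg,
        ENNReal.ofReal_toReal h]
    rw [this, eexp_ofReal (by positivity), ENNReal.ofReal_rpow_of_pos (Real.exp_pos _),
      ← Real.exp_mul, mul_comm l]

lemma eexp_rpow_top {κ l : ℝ} (hκ : 0 < κ) (hl : 0 < l) :
    eexp (ENNReal.ofReal κ * ⊤ ^ 2) ^ l = ⊤ := by
  have : ENNReal.ofReal κ * ⊤ ^ 2 = ⊤ := by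
    simp [ENNReal.mul_top, hκ]
  rw [this]
  simp [eexp, hl]

lemma eexp_snoc_le {n : ℕ} (hn : 1 ≤ n) (v : Fin n → ℝ) (t y l κ : ℝ)
    (A : Set (Fin (n + 1) → ℝ)) (hκ : 0 < κ) (hl0 : 0 ≤ l) (hl1 : l ≤ 1) :
    eexp (ENNReal.ofReal κ * distcE (Fin.snoc v t : Fin (n + 1) → ℝ) A ^ 2) ≤
      eexp (ENNReal.ofReal κ * distcE v {u : Fin n → ℝ | Fin.snoc u t ∈ A} ^ 2) ^ l *
      eexp (ENNReal.ofReal κ * distcE v {u : Fin n → ℝ | Fin.snoc u y ∈ A} ^ 2) ^ (1 - l) *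
      ENNReal.ofReal (Real.exp (κ * (1 - l) ^ 2 * (y - t) ^ 2)) := by
  have hpos : ∀ (x : ℝ≥0∞) (p : ℝ), 0 ≤ p → eexp x ^ p ≠ 0 := by
    intro x p hp
    exact (lt_of_lt_of_le one_pos (by simpa using ENNReal.rpow_le_rpow (one_le_eexp x) hp)).ne'
  have hC : ENNReal.ofReal (Real.exp (κ * (1 - l) ^ 2 * (y - t) ^ 2)) ≠ 0 := by
    simpa using Real.exp_pos _
  have hne : ∀ x : ℝ, distcE v {u : Fin n → ℝ | Fin.snoc u x ∈ A} ≠ ⊤ →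
      {u : Fin n → ℝ | Fin.snoc u x ∈ A}.Nonempty := by
    intro x hx
    rw [Set.nonempty_iff_ne_empty]
    intro h
    rw [h] at hx
    exact hx (distcE_empty hn v)
  set dt := distcE v {u : Fin n → ℝ | Fin.snoc u t ∈ A} with hdt
  set dy := distcE v {u : Fin n → ℝ | Fin.snoc u y ∈ A} with hdy
  by_cases h1 : 0 < l ∧ dt = ⊤
  · rw [h1.2, eexp_rpow_top hκ h1.1, ENNReal.top_mul (hpos _ _ (by linarith)),
      ENNReal.top_mul hC]
    exact le_top
  by_cases h2 : l < 1 ∧ dy = ⊤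
  · rw [h2.2, eexp_rpow_top hκ (by linarith [h2.1]), ENNReal.mul_top (hpos _ _ (by linarith)),
      ENNReal.top_mul hC]
    exact le_top
  push Not at h1 h2
  have h1' : l = 0 ∨ dt ≠ ⊤ := by
    rcases hl0.eq_or_lt with h0 | h0
    · exact Or.inl h0.symm
    · exact Or.inr (h1 h0)
  have h2' : 1 - l = 0 ∨ dy ≠ ⊤ := by
    rcases hl1.eq_or_lt with h0 | h0
    · left; linarith
    · exact Or.inr (h2 h0)
  rw [eexp_rpow hκ _ h1', eexp_rpow hκ _ h2', ← ENNReal.ofReal_mul (Real.exp_pos _).le,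
    ← ENNReal.ofReal_mul (by positivity), ← Real.exp_add, ← Real.exp_add]
  have hD0 : 0 ≤ dt.toReal := ENNReal.toReal_nonneg
  have hE0 : 0 ≤ dy.toReal := ENNReal.toReal_nonneg
  have key := distcE_snoc_le v t y l A hl0 hl1 hD0 hE0
    (fun h => ⟨hne t (h1 h), by rw [ENNReal.ofReal_toReal (h1 h)]⟩)
    (fun h => ⟨hne y (h2 h), by rw [ENNReal.ofReal_toReal (h2 h)]⟩)
  set D := dt.toReal
  set E := dy.toReal
  have key2 : ENNReal.ofReal κ * distcE (Fin.snoc v t : Fin (n + 1) → ℝ) A ^ 2 ≤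
      ENNReal.ofReal (κ * ((l * D + (1 - l) * E) ^ 2 + ((1 - l) * |y - t|) ^ 2)) := by
    rw [ENNReal.ofReal_mul hκ.le]
    refine mul_le_mul_right ((pow_le_pow_left' key 2).trans ?_) _
    rw [← ENNReal.ofReal_pow (Real.sqrt_nonneg _), Real.sq_sqrt (by positivity)]
  refine (eexp_mono key2).trans ?_
  rw [eexp_ofReal (by positivity)]
  refine ENNReal.ofReal_le_ofReal (Real.exp_le_exp.2 ?_)
  rw [mul_pow, sq_abs]
  have h5 : (l * D + (1 - l) * E) ^ 2 ≤ l * D ^ 2 + (1 - l) * E ^ 2 := by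
    nlinarith [mul_nonneg (mul_nonneg hl0 (sub_nonneg.2 hl1)) (sq_nonneg (D - E))]
  nlinarith [mul_le_mul_of_nonneg_left h5 hκ.le]

lemma Hfun_le (κ : ℝ) (h : ℝ → EReal) (t y l : ℝ) (hl : l ∈ Set.Icc (0 : ℝ) 1) :
    Hfun κ h t y ≤ -((l : EReal) * h t) - (((1 - l : ℝ)) : EReal) * h y +
      ((κ * (1 - l) ^ 2 * (y - t) ^ 2 : ℝ) : EReal) :=
  iInf_le (fun l : Set.Icc (0 : ℝ) 1 => (-(((l : ℝ) : EReal) * h t) -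
    (((1 - (l : ℝ)) : ℝ) : EReal) * h y +
      ((κ * (1 - (l : ℝ)) ^ 2 * (y - t) ^ 2 : ℝ) : EReal))) ⟨l, hl⟩

lemma Hfun_real_eq {κ : ℝ} {h : ℝ → EReal} {t y ht hy m c : ℝ} (h1 : h t = ht) (h2 : h y = hy)
    (hm : m ∈ Set.Icc (0 : ℝ) 1)
    (hc : -(m * ht) - (1 - m) * hy + κ * (1 - m) ^ 2 * (y - t) ^ 2 = c)
    (hmin : ∀ l ∈ Set.Icc (0 : ℝ) 1,
      c ≤ -(l * ht) - (1 - l) * hy + κ * (1 - l) ^ 2 * (y - t) ^ 2) :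
    Hfun κ h t y = (c : EReal) := by
  apply le_antisymm
  · refine (Hfun_le κ h t y m hm).trans ?_
    rw [h1, h2, ← hc]
    norm_cast
  · refine le_iInf fun l => ?_
    rw [h1, h2]
    have := hmin l l.2
    exact_mod_cast this

lemma Hfun_bot_left {κ : ℝ} {h : ℝ → EReal} {t y hy : ℝ} (h1 : h t = ⊥) (h2 : h y = hy) :
    Hfun κ h t y = ((-hy + κ * (y - t) ^ 2 : ℝ) : EReal) := by
  apply le_antisymm
  · refine (Hfun_le κ h t y 0 (by simp)).trans ?_
    rw [h1, h2]
    simp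
  · refine le_iInf fun l => ?_
    rw [h1, h2]
    rcases l.2.1.eq_or_lt with h0 | h0
    · rw [← h0]
      simp
    · rw [EReal.coe_mul_bot_of_pos h0, EReal.neg_bot, ← EReal.coe_mul, EReal.top_sub_coe,
        EReal.top_add_coe]
      exact le_top

lemma Hfun_bot_right {κ : ℝ} {h : ℝ → EReal} {t y ht : ℝ} (h1 : h t = ht) (h2 : h y = ⊥) :
    Hfun κ h t y = ((-ht : ℝ) : EReal) := by
  apply le_antisymm
  · refine (Hfun_le κ h t y 1 (by simp)).trans ?_
    rw [h1, h2]
    simp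
  · refine le_iInf fun l => ?_
    rw [h1, h2]
    rcases l.2.2.eq_or_lt with h0 | h0
    · rw [h0]
      simp
    · rw [EReal.coe_mul_bot_of_pos (by linarith), ← EReal.coe_mul, ← EReal.coe_neg,
        EReal.coe_sub_bot, EReal.top_add_coe]
      exact le_top

lemma Hfun_bot_bot {κ : ℝ} {h : ℝ → EReal} {t y : ℝ} (h1 : h t = ⊥) (h2 : h y = ⊥) :
    Hfun κ h t y = ⊤ := by
  rw [eq_top_iff]
  refine le_iInf fun l => ?_
  rw [h1, h2]
  rcases l.2.1.eq_or_lt with h0 | h0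
  · rw [← h0, sub_zero, EReal.coe_one, one_mul]
    simp only [EReal.coe_zero, zero_mul, neg_zero, zero_sub, EReal.neg_bot, EReal.top_add_coe,
      le_refl]
  · rw [EReal.coe_mul_bot_of_pos h0, EReal.neg_bot]
    rcases l.2.2.eq_or_lt with h0 | h0
    · rw [h0]
      simp
    · rw [EReal.coe_mul_bot_of_pos (by linarith)]
      simp only [EReal.top_sub_bot, EReal.top_add_coe, le_refl]

lemma Hfun_formulas {κ : ℝ} (hκ : 0 < κ) {h : ℝ → EReal} (htop : ∀ x, h x ≠ ⊤) (t y : ℝ) :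
    ((((2 * κ * (y - t) ^ 2 : ℝ)) : EReal) ≤ h y - h t →
        Hfun κ h t y = -h y + ((κ * (y - t) ^ 2 : ℝ) : EReal)) ∧
      (∀ ht hy : ℝ, h t = (ht : EReal) → h y = (hy : EReal) →
        0 ≤ hy - ht → hy - ht ≤ 2 * κ * (y - t) ^ 2 →
        Hfun κ h t y = ((-ht - (hy - ht) ^ 2 / (4 * κ * (y - t) ^ 2) : ℝ) : EReal)) ∧
      (h y - h t ≤ 0 → Hfun κ h t y = -h t) := by
  have hcases : ∀ x, h x = ⊥ ∨ ∃ r : ℝ, h x = r := by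
    intro x
    have := htop x
    induction hx : h x with
    | bot => exact Or.inl rfl
    | coe r => exact Or.inr ⟨r, rfl⟩
    | top => exact absurd hx this
  refine ⟨?_, ?_, ?_⟩
  · intro hle
    rcases hcases y with h2 | ⟨hy, h2⟩
    · rw [h2, EReal.bot_sub] at hle
      exact absurd (le_bot_iff.1 hle) (EReal.coe_ne_bot _)
    rcases hcases t with h1 | ⟨ht, h1⟩
    · rw [Hfun_bot_left h1 h2, h2]
      norm_cast
    · rw [h1, h2] at hle
      have hle' : 2 * κ * (y - t) ^ 2 ≤ hy - ht := by exact_mod_cast hle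
      rw [Hfun_real_eq (m := 0) (c := -hy + κ * (y - t) ^ 2) h1 h2 (by simp) (by ring), h2]
      · norm_cast
      · rintro l ⟨hl0, hl1⟩
        have hs : 0 ≤ κ * (y - t) ^ 2 := by positivity
        nlinarith [mul_le_mul_of_nonneg_left hle' hl0, mul_nonneg hs (sq_nonneg l)]
  · intro ht hy h1 h2 h0 hle
    by_cases hs : y - t = 0
    · rw [hs] at hle ⊢
      have : hy = ht := by
        norm_num at hle; linarith
      subst this
      refine Hfun_real_eq (m := 1) h1 h2 (by simp) (by simp) ?_
      rintro l ⟨hl0, hl1⟩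
      rw [hs]
      simp only [sub_self]
      norm_num
      linarith
    · have hs2 : 0 < (y - t) ^ 2 := by positivity
      have hden : 0 < 2 * κ * (y - t) ^ 2 := by positivity
      refine Hfun_real_eq (m := 1 - (hy - ht) / (2 * κ * (y - t) ^ 2)) h1 h2 ?_ ?_ ?_
      · have h3 : (hy - ht) / (2 * κ * (y - t) ^ 2) ≤ 1 := (div_le_one hden).2 hle
        have h4 : 0 ≤ (hy - ht) / (2 * κ * (y - t) ^ 2) := by positivity
        constructor <;> linarith
      · field_simp
        ring
      · rintro l ⟨hl0, hl1⟩
        have : -(l * ht) - (1 - l) * hy + κ * (1 - l) ^ 2 * (y - t) ^ 2 -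
          (-ht - (hy - ht) ^ 2 / (4 * κ * (y - t) ^ 2)) =
          κ * (y - t) ^ 2 * ((1 - l) - (hy - ht) / (2 * κ * (y - t) ^ 2)) ^ 2 := by
          field_simp
          ring
        have h5 : 0 ≤ κ * (y - t) ^ 2 * ((1 - l) - (hy - ht) / (2 * κ * (y - t) ^ 2)) ^ 2 := by
          positivity
        linarith
  · intro hle
    rcases hcases t with h1 | ⟨ht, h1⟩
    · rcases hcases y with h2 | ⟨hy, h2⟩
      · rw [Hfun_bot_bot h1 h2, h1]
        rfl
      · rw [h1, h2] at hle
        simp at hle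
    · rcases hcases y with h2 | ⟨hy, h2⟩
      · rw [Hfun_bot_right h1 h2, h1]
        norm_cast
      · rw [h1, h2] at hle
        have hle' : hy - ht ≤ 0 := by exact_mod_cast hle
        rw [Hfun_real_eq (m := 1) (c := -ht) h1 h2 (by simp) (by ring), h1]
        · norm_cast
        · rintro l ⟨hl0, hl1⟩
          have hs : 0 ≤ κ * (1 - l) ^ 2 * (y - t) ^ 2 := by positivity
          nlinarith [mul_nonneg (sub_nonneg.2 hl1) (neg_nonneg.2 hle')]

lemma log_inner_le {n : ℕ} (hn : 1 ≤ n) (ν : Measure (Fin n → ℝ))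
    (A : Set (Fin (n + 1) → ℝ)) (κ : ℝ) (hκ : 0 < κ) (h : ℝ → EReal)
    (hh : ∀ x : ℝ, h x ≤
      -elog (∫⁻ v, eexp (ENNReal.ofReal κ *
          distcE v {u : Fin n → ℝ | Fin.snoc u x ∈ A} ^ 2) ∂ν)) (t y : ℝ) :
    ∫⁻ v, eexp (ENNReal.ofReal κ * distcE (Fin.snoc v t : Fin (n + 1) → ℝ) A ^ 2) ∂ν ≤
      eexpE (Hfun κ h t y) := by
  rw [eexpE_eq, ← ENNReal.exp_log (∫⁻ v, _ ∂ν), EReal.exp_le_exp_iff]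
  refine le_iInf fun l => ?_
  obtain ⟨l, hl0, hl1⟩ := l
  have hmeas : ∀ x : ℝ, Measurable fun v => eexp (ENNReal.ofReal κ *
          distcE v {u : Fin n → ℝ | Fin.snoc u x ∈ A} ^ 2) := fun x =>
    measurable_eexp.comp (((continuous_distcE _).measurable.pow_const 2).const_mul _)
  have h1 := lintegral_mono (μ := ν) (fun v => eexp_snoc_le hn v t y l κ A hκ hl0 hl1)
  rw [lintegral_mul_const' _ _ ENNReal.ofReal_ne_top] at h1
  have h2 := ENNReal.lintegral_mul_norm_pow_le (μ := ν) (hmeas t).aemeasurable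
    (hmeas y).aemeasurable hl0 (sub_nonneg.2 hl1) (by ring)
  have h3 := ENNReal.log_le_log (h1.trans (mul_le_mul_left h2 _))
  refine h3.trans ?_
  rw [ENNReal.log_mul_add, ENNReal.log_mul_add, ENNReal.log_rpow, ENNReal.log_rpow,
    ENNReal.log_ofReal_of_pos (Real.exp_pos _), Real.log_exp]
  simp only
  have hb : ∀ (x p : ℝ), 0 ≤ p → (p : EReal) * ENNReal.log (∫⁻ v, eexp (ENNReal.ofReal κ *
          distcE v {u : Fin n → ℝ | Fin.snoc u x ∈ A} ^ 2) ∂ν) ≤ -((p : EReal) * h x) := by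
    intro x p hp
    rw [← mul_neg]
    exact mul_le_mul_of_nonneg_left (EReal.le_neg_of_le_neg (hh x)) (by exact_mod_cast hp)
  rw [sub_eq_add_neg (-((l : EReal) * h t))]
  exact add_le_add (add_le_add (hb t l hl0) (hb y (1 - l) (sub_nonneg.2 hl1))) le_rfl

theorem induction_step_with_H {n : ℕ} (hn : 1 ≤ n)
    (μ : Fin (n + 1) → Measure ℝ) (hμ : ∀ i, IsProbabilityMeasure (μ i))
    (A : Set (Fin (n + 1) → ℝ)) (hA : A.Nonempty)
    (κ : ℝ) (hκ : 0 < κ) (h : ℝ → EReal)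
    (hh : ∀ x : ℝ, h x ≤
      -elog (∫⁻ v, eexp (ENNReal.ofReal κ *
          distcE v {u : Fin n → ℝ | Fin.snoc u x ∈ A} ^ 2)
        ∂(Measure.pi fun i : Fin n => μ i.castSucc))) :
    (∫⁻ x, eexp (ENNReal.ofReal κ * distcE x A ^ 2) ∂(Measure.pi μ) ≤
      ∫⁻ x, ⨅ y : ℝ, eexpE (Hfun κ h (x (Fin.last n)) y) ∂(Measure.pi μ)) ∧
    (∀ t y : ℝ,
      ((((2 * κ * (y - t) ^ 2 : ℝ)) : EReal) ≤ h y - h t →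
        Hfun κ h t y = -h y + ((κ * (y - t) ^ 2 : ℝ) : EReal)) ∧
      (∀ ht hy : ℝ, h t = (ht : EReal) → h y = (hy : EReal) →
        0 ≤ hy - ht → hy - ht ≤ 2 * κ * (y - t) ^ 2 →
        Hfun κ h t y = ((-ht - (hy - ht) ^ 2 / (4 * κ * (y - t) ^ 2) : ℝ) : EReal)) ∧
      (h y - h t ≤ 0 → Hfun κ h t y = -h t)) := by
  have h0 : ∀ x, h x ≤ 0 := by
    intro x
    refine (hh x).trans ?_
    rw [elog_eq, EReal.neg_le, neg_zero, ENNReal.zero_le_log_iff]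
    calc (1 : ℝ≥0∞) = ∫⁻ v, 1 ∂(Measure.pi fun i : Fin n => μ i.castSucc) := by simp
      _ ≤ _ := lintegral_mono fun v => one_le_eexp _
  refine ⟨?_, fun t y => Hfun_formulas hκ
    (fun x => ne_top_of_le_ne_top EReal.zero_ne_top (h0 x)) t y⟩
  set ν := Measure.pi fun i : Fin n => μ i.castSucc with hν
  have hmeas : Measurable fun x : Fin (n + 1) → ℝ => eexp (ENNReal.ofReal κ * distcE x A ^ 2) :=
    measurable_eexp.comp (((continuous_distcE _).measurable.pow_const 2).const_mul _)
  have hsnoc : Measurable fun p : ℝ × (Fin n → ℝ) => (Fin.snoc p.2 p.1 : Fin (n + 1) → ℝ) := by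
    rw [measurable_pi_iff]
    intro i
    refine Fin.lastCases ?_ (fun j => ?_) i
    · simpa using measurable_fst
    · simp only [Fin.snoc_castSucc]; fun_prop
  have hmeas2 := hmeas.comp hsnoc
  set G : ℝ → ℝ≥0∞ := fun t =>
    ∫⁻ v, eexp (ENNReal.ofReal κ * distcE (Fin.snoc v t : Fin (n + 1) → ℝ) A ^ 2) ∂ν with hG
  have hGm : Measurable G := hmeas2.lintegral_prod_right'
  have e1 : ∫⁻ x, eexp (ENNReal.ofReal κ * distcE x A ^ 2) ∂(Measure.pi μ) =
      ∫⁻ t, G t ∂(μ (Fin.last n)) := by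
    have hp := measurePreserving_piFinSuccAbove μ (Fin.last n)
    have hν' : (Measure.pi fun j : Fin n => μ ((Fin.last n).succAbove j)) = ν := by
      simp [hν, Fin.succAbove_last]
    rw [hν'] at hp
    have e2 := hp.lintegral_comp hmeas2
    rw [lintegral_prod _ hmeas2.aemeasurable] at e2
    rw [hG, ← lintegral_congr fun t => rfl]
    refine Eq.trans (lintegral_congr fun x => ?_) e2
    have : (Fin.snoc (fun j : Fin n => x ((Fin.last n).succAbove j)) (x (Fin.last n)) :
        Fin (n + 1) → ℝ) = x := by
      ext i
      refine Fin.lastCases ?_ (fun j => ?_) i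
      · simp
      · simp [Fin.succAbove_last]
    conv_lhs => rw [← this]
    rfl
  rw [e1, ← (measurePreserving_eval μ (Fin.last n)).lintegral_comp hGm]
  refine lintegral_mono fun x => le_iInf fun y => ?_
  exact log_inner_le hn ν A κ hκ h hh (x (Fin.last n)) y
end
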